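/- arXiv:2605.24472 — 3 statements merged into one kernel-verified Lean document; each statement's English description precedes it below -/
import Mathlib

section
/- Let n ≥ 2 and p > 1. Set α = (1/n) · e^{(p-1)n/p} · ((p-1)n/p)^{n/p} · Γ(1 - n/p, (p-1)n/p). Then for all convex bodies K, L in ℝⁿ containing the origin and all λ ∈ [0,1], one has μ_p(λK + (1-λ)L)^α ≥ λ·μ_p(K)^α + (1-λ)·μ_p(L)^α. -/
open MeasureTheory Real Set Pointwise

noncomputable def uiGamma (s x : ℝ) : ℝ := ∫ t in Set.Ioi x, t ^ (s - 1) * Real.exp (-t)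

lemma bm_compact {A B S : Set ℝ} (hA : IsCompact A) (hB : IsCompact B) (nA : A.Nonempty) (nB : B.Nonempty)
    (h : ∀ a ∈ A, ∀ b ∈ B, (a+b)/2 ∈ S) : volume A + volume B ≤ 2 * volume S := by
  obtain ⟨b0, hb0, hb⟩ := hB.exists_isLeast nB
  obtain ⟨a1, ha1, ha⟩ := hA.exists_isGreatest nA
  set A' := (fun x => (1/2:ℝ) * x + b0/2) '' A
  set B' := (fun x => (1/2:ℝ) * x + a1/2) '' B
  have key : ∀ (c : ℝ) (X : Set ℝ), volume ((fun x => (1/2:ℝ) * x + c) '' X) = ENNReal.ofReal (1/2) * volume X := by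
    intro c X
    have : (fun x => (1/2:ℝ) * x + c) '' X = (fun x => x + c) '' ((1/2:ℝ) • X) := by
      rw [← image_smul, image_image]; simp
    rw [this, image_add_right, measure_preimage_add_right, Measure.addHaar_smul]
    simp
  have hA' : volume A' = ENNReal.ofReal (1/2) * volume A := key _ _
  have hB' : volume B' = ENNReal.ofReal (1/2) * volume B := key _ _
  have hcB : IsCompact B' := hB.image (by fun_prop)
  have hsub : A' ∪ B' ⊆ S := by
    rintro _ (⟨x, hx, rfl⟩ | ⟨x, hx, rfl⟩)
    · convert h x hx b0 hb0 using 1; ring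
    · convert h a1 ha1 x hx using 1; ring
  have hint : volume (A' ∩ B') = 0 := by
    refine measure_mono_null (t := {(a1+b0)/2}) ?_ (by simp)
    rintro _ ⟨⟨x, hx, rfl⟩, ⟨y, hy, hxy⟩⟩
    have h1 := ha hx
    have h2 := hb hy
    simp only at hxy ⊢
    rw [mem_singleton_iff]; linarith
  have hu := measure_union_add_inter (μ := volume) A' hcB.measurableSet
  rw [hint, add_zero, hA', hB', ← mul_add] at hu
  have h3 : ENNReal.ofReal (1/2) * (volume A + volume B) ≤ volume S := hu ▸ measure_mono hsub
  calc volume A + volume B = 2 * (ENNReal.ofReal (1/2) * (volume A + volume B)) := by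
        rw [← mul_assoc]
        have : (2:ENNReal) * ENNReal.ofReal (1/2) = 1 := by
          rw [show (2:ENNReal) = ENNReal.ofReal 2 by simp, ← ENNReal.ofReal_mul (by norm_num)]; norm_num
        rw [this, one_mul]
    _ ≤ _ := by gcongr

lemma bm_meas {A B S : Set ℝ} (hA : MeasurableSet A) (hB : MeasurableSet B) (nA : A.Nonempty) (nB : B.Nonempty)
    (h : ∀ a ∈ A, ∀ b ∈ B, (a+b)/2 ∈ S) : volume A + volume B ≤ 2 * volume S := by
  have key : ∀ X : Set ℝ, MeasurableSet X → X.Nonempty → ∀ c : ENNReal,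
      (∀ K ⊆ X, IsCompact K → K.Nonempty → volume K ≤ c) → volume X ≤ c := by
    intro X hX ⟨x, hx⟩ c hc
    rw [hX.measure_eq_iSup_isCompact]
    refine iSup_le fun K => iSup_le fun hK => iSup_le fun hKc => ?_
    rcases K.eq_empty_or_nonempty with rfl | hne
    · simp
    · exact hc K hK hKc hne
  by_cases hS : volume S = ⊤
  · simp [hS]
  have hAS : ∀ K ⊆ A, IsCompact K → K.Nonempty → ∀ K' ⊆ B, IsCompact K' → K'.Nonempty →
      volume K + volume K' ≤ 2 * volume S := fun K hK hKc hKn K' hK' hKc' hKn' =>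
    bm_compact hKc hKc' hKn hKn' fun a ha b hb => h a (hK ha) b (hK' hb)
  have h1 : ∀ K ⊆ A, IsCompact K → K.Nonempty → volume K + volume B ≤ 2 * volume S := by
    intro K hK hKc hKn
    have := key B hB nB (2 * volume S - volume K) fun K' a b c => by
      have := hAS K hK hKc hKn K' a b c
      exact ENNReal.le_sub_of_add_le_left hKc.measure_lt_top.ne this
    have h2 := hAS K hK hKc hKn {nB.some} (by simpa using nB.some_mem) isCompact_singleton (by simp)
    calc _ ≤ volume K + (2 * volume S - volume K) := by gcongr
      _ = _ := add_tsub_cancel_of_le (le_trans (by simp) h2)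
  have hBf : volume B ≠ ⊤ := by
    have := h1 {nA.some} (by simpa using nA.some_mem) isCompact_singleton (by simp)
    simp only [Real.volume_singleton, zero_add] at this
    exact ne_top_of_le_ne_top (ENNReal.mul_ne_top (by simp) hS) this
  have := key A hA nA (2 * volume S - volume B) fun K a b c =>
      ENNReal.le_sub_of_add_le_right hBf (h1 K a b c)
  have h2 := h1 {nA.some} (by simpa using nA.some_mem) isCompact_singleton (by simp)
  calc _ ≤ (2 * volume S - volume B) + volume B := by gcongr
      _ = _ := tsub_add_cancel_of_le (le_trans (by simp) h2)

noncomputable def Nm (k : ℕ) (a b : ℝ) : ℝ :=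
  if k = 0 then min a b else ((a ^ (-1/(k:ℝ)) + b ^ (-1/(k:ℝ)))/2) ^ (-(k:ℝ))

lemma Nm_pos (k : ℕ) {a b : ℝ} (ha : 0 < a) (hb : 0 < b) : 0 < Nm k a b := by
  unfold Nm; split_ifs
  · exact lt_min ha hb
  · positivity

lemma Nm_mono (k : ℕ) {a b a' b' : ℝ} (ha : 0 < a) (hb : 0 < b) (haa : a ≤ a') (hbb : b ≤ b') :
    Nm k a b ≤ Nm k a' b' := by
  unfold Nm; split_ifs with h
  · exact min_le_min haa hbb
  · have hk : (0:ℝ) < k := by positivity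
    have : -1/(k:ℝ) ≤ 0 := by rw [neg_div]; simp
    have ha' := ha.trans_le haa
    have hb' := hb.trans_le hbb
    apply Real.rpow_le_rpow_of_nonpos (by positivity) _ (by simp)
    have := Real.rpow_le_rpow_of_nonpos ha haa this
    have := Real.rpow_le_rpow_of_nonpos hb hbb ‹-1/(k:ℝ) ≤ 0›
    linarith

lemma Nm_smul (k : ℕ) {s a b : ℝ} (hs : 0 < s) (ha : 0 < a) (hb : 0 < b) :
    Nm (k+1) (s*a) (s*b) = s * Nm (k+1) a b := by
  unfold Nm
  simp only [Nat.add_eq_zero_iff, one_ne_zero, and_false, if_false]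
  rw [Real.mul_rpow hs.le ha.le, Real.mul_rpow hs.le hb.le, ← mul_add, mul_div_assoc,
    Real.mul_rpow (by positivity) (by positivity), ← Real.rpow_mul hs.le]
  congr 1
  have : -1 / ((k+1:ℕ):ℝ) * -((k+1:ℕ):ℝ) = 1 := by field_simp
  rw [this, Real.rpow_one]

lemma Nm_holder (k : ℕ) {F G I J : ℝ} (hF : 0 < F) (hG : 0 < G) (hI : 0 < I) (hJ : 0 < J) :
    Nm k I J ≤ Nm (k+1) F G * ((I/F + J/G)/2) := by
  rcases Nat.eq_zero_or_pos k with rfl | hk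
  · unfold Nm
    simp only [if_true, zero_add, one_ne_zero, if_false, Nat.cast_one, div_one, Real.rpow_neg_one]
    set m := min I J
    have h1 : m ≤ I := min_le_left _ _
    have h2 : m ≤ J := min_le_right _ _
    have hc : 0 < (F⁻¹ + G⁻¹)/2 := by positivity
    rw [inv_mul_eq_div, le_div_iff₀ hc]
    have : m / F ≤ I/F := by gcongr
    have : m / G ≤ J/G := by gcongr
    rw [show m * ((F⁻¹ + G⁻¹)/2) = (m/F + m/G)/2 by field_simp]
    linarith
  · have hk0 : (0:ℝ) < k := by exact_mod_cast hk
    unfold Nm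
    simp only [Nat.add_eq_zero_iff, one_ne_zero, and_false, if_false, hk.ne']
    push_cast
    generalize (k:ℝ) = κ at *
    set P := (I ^ (-1/κ) + J ^ (-1/κ))/2 with hP
    set Q := (F ^ (-1/(κ+1)) + G ^ (-1/(κ+1)))/2 with hQ
    set s := I/F with hs
    set t := J/G with ht
    have hsp : 0 < s := by positivity
    have htp : 0 < t := by positivity
    have hPp : 0 < P := by positivity
    have hQp : 0 < Q := by positivity
    have hpq : ((κ+1)/κ).HolderConjugate (κ+1) := by
      rw [Real.holderConjugate_iff]
      constructor
      · rw [lt_div_iff₀ hk0]; linarith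
      · field_simp
    -- Q ≤ P^(κ/(κ+1)) * ((s+t)/2)^(1/(κ+1))
    have hh := Real.inner_le_Lp_mul_Lq_of_nonneg (s := (Finset.univ : Finset (Fin 2)))
      (f := ![I ^ (-1/(κ+1)), J ^ (-1/(κ+1))]) (g := ![s ^ (1/(κ+1)), t ^ (1/(κ+1))]) hpq
      (by intro i _; fin_cases i <;> simp <;> positivity) (by intro i _; fin_cases i <;> simp <;> positivity)
    simp only [Fin.sum_univ_two, Matrix.cons_val_zero, Matrix.cons_val_one] at hh
    have e1 : ∀ (X Y : ℝ), 0 < X → 0 < Y → X ^ (-1/(κ+1)) * (X/Y) ^ (1/(κ+1)) = Y ^ (-1/(κ+1)) := by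
      intro X Y hX hY
      rw [Real.div_rpow hX.le hY.le, neg_div, Real.rpow_neg hX.le, Real.rpow_neg hY.le]
      have : 0 < X ^ (1/(κ+1)) := by positivity
      field_simp
    rw [hs, ht, e1 I F hI hF, e1 J G hJ hG, ← hs, ← ht, ← Real.rpow_mul hI.le, ← Real.rpow_mul hJ.le,
      ← Real.rpow_mul hsp.le, ← Real.rpow_mul htp.le] at hh
    rw [show -1/(κ+1) * ((κ+1)/κ) = -1/κ by field_simp, show 1/(κ+1)*(κ+1) = 1 by field_simp, Real.rpow_one,
      Real.rpow_one, show I ^ (-1/κ) + J ^ (-1/κ) = 2 * P by rw [hP]; ring,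
      show F ^ (-1/(κ+1)) + G ^ (-1/(κ+1)) = 2 * Q by rw [hQ]; ring, show s + t = 2 * ((s+t)/2) by ring] at hh
    set W := (s+t)/2 with hW
    have hWp : 0 < W := by positivity
    rw [Real.mul_rpow (by norm_num) hPp.le, Real.mul_rpow (by norm_num) hWp.le] at hh
    have h2 : (2:ℝ) ^ (1/((κ+1)/κ)) * 2 ^ (1/(κ+1)) = 2 := by
      rw [← Real.rpow_add (by norm_num), show 1/((κ+1)/κ) + 1/(κ+1) = 1 by field_simp, Real.rpow_one]
    have h3 : Q ≤ P ^ (1/((κ+1)/κ)) * W ^ (1/(κ+1)) := by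
      have : 2 * Q ≤ 2 * (P ^ (1/((κ+1)/κ)) * W ^ (1/(κ+1))) := by
        calc 2 * Q ≤ _ := hh
          _ = (2 ^ (1/((κ+1)/κ)) * 2 ^ (1/(κ+1))) * (P ^ (1/((κ+1)/κ)) * W ^ (1/(κ+1))) := by ring
          _ = _ := by rw [h2]
      linarith
    have h4 : Q ^ (κ+1) ≤ P ^ κ * W := by
      calc Q ^ (κ+1) ≤ (P ^ (1/((κ+1)/κ)) * W ^ (1/(κ+1))) ^ (κ+1) := by gcongr
        _ = P ^ κ * W := by
          rw [Real.mul_rpow (by positivity) (by positivity), ← Real.rpow_mul hPp.le, ← Real.rpow_mul hWp.le]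
          rw [show 1/((κ+1)/κ) * (κ+1) = κ by field_simp, show 1/(κ+1)*(κ+1) = 1 by field_simp, Real.rpow_one]
    rw [Real.rpow_neg hPp.le, Real.rpow_neg hQp.le, inv_mul_eq_div, le_div_iff₀ (by positivity),
      inv_mul_eq_div, div_le_iff₀ (by positivity)]
    linarith

lemma bbl1 (k : ℕ) {f g h : ℝ → ℝ} (mf : Measurable f) (mg : Measurable g)
    (f0 : ∀ x, 0 ≤ f x) (g0 : ∀ x, 0 ≤ g x) (h0 : ∀ x, 0 ≤ h x)
    (If : Integrable f) (Ig : Integrable g) (Ih : Integrable h) {C : ℝ} (fC : ∀ x, f x ≤ C) (gC : ∀ x, g x ≤ C)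
    (hyp : ∀ x y, 0 < f x → 0 < g y → Nm (k+1) (f x) (g y) ≤ h ((x+y)/2))
    (pf : 0 < ∫ x, f x) (pg : 0 < ∫ x, g x) : Nm k (∫ x, f x) (∫ x, g x) ≤ ∫ x, h x := by
  have bf : BddAbove (range f) := ⟨C, by rintro _ ⟨x, rfl⟩; exact fC x⟩
  have bg : BddAbove (range g) := ⟨C, by rintro _ ⟨x, rfl⟩; exact gC x⟩
  set F := ⨆ x, f x with hF
  set G := ⨆ x, g x with hG
  have pos_aux : ∀ (u : ℝ → ℝ), (∀ x, 0 ≤ u x) → BddAbove (range u) → 0 < ∫ x, u x → 0 < ⨆ x, u x := by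
    intro u u0 bu pu
    by_contra hcon
    have : ∀ x, u x = 0 := fun x => le_antisymm ((le_ciSup bu x).trans (not_lt.1 hcon)) (u0 x)
    simp [this] at pu
  have Fp : 0 < F := pos_aux f f0 bf pf
  have Gp : 0 < G := pos_aux g g0 bg pg
  set N := Nm (k+1) F G with hN
  have Np : 0 < N := Nm_pos _ Fp Gp
  have cake : ∀ (u : ℝ → ℝ) (c : ℝ), 0 < c → (∀ x, 0 ≤ u x) → Integrable u →
      ENNReal.ofReal ((∫ x, u x)/c) = ∫⁻ s in Ioi (0:ℝ), volume {x | s < u x / c} := by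
    intro u c hc u0 Iu
    rw [← lintegral_eq_lintegral_meas_lt volume (Filter.Eventually.of_forall fun x => div_nonneg (u0 x) hc.le)
      (Iu.div_const c).aemeasurable, ← ofReal_integral_eq_lintegral_ofReal (Iu.div_const c)
      (Filter.Eventually.of_forall fun x => div_nonneg (u0 x) hc.le), integral_div]
  have cake' : ∀ (u : ℝ → ℝ) (c : ℝ), 0 < c → (∀ x, 0 ≤ u x) → Integrable u →
      ENNReal.ofReal ((∫ x, u x)/c) = ∫⁻ s in Ioi (0:ℝ), volume {x | s ≤ u x / c} := by
    intro u c hc u0 Iu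
    rw [← lintegral_eq_lintegral_meas_le volume (Filter.Eventually.of_forall fun x => div_nonneg (u0 x) hc.le)
      (Iu.div_const c).aemeasurable, ← ofReal_integral_eq_lintegral_ofReal (Iu.div_const c)
      (Filter.Eventually.of_forall fun x => div_nonneg (u0 x) hc.le), integral_div]
  have key : ENNReal.ofReal ((∫ x, f x)/F) + ENNReal.ofReal ((∫ x, g x)/G) ≤ 2 * ENNReal.ofReal ((∫ x, h x)/N) := by
    rw [cake f F Fp f0 If, cake g G Gp g0 Ig, cake' h N Np h0 Ih, ← lintegral_const_mul' _ _ (by simp)]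
    have mm : Measurable fun s : ℝ => volume {x | s < f x / F} := by
      apply Antitone.measurable
      intro a b hab
      exact measure_mono fun x hx => lt_of_le_of_lt hab hx
    rw [← lintegral_add_left mm]
    refine setLIntegral_mono' measurableSet_Ioi fun s hs => ?_
    have hs : 0 < s := hs
    rcases lt_or_ge s 1 with h1 | h1
    · apply bm_meas (measurableSet_lt measurable_const (mf.div_const F)) (measurableSet_lt measurable_const (mg.div_const G))
      · have : s * F < F := by nlinarith
        obtain ⟨x, hx⟩ := exists_lt_of_lt_ciSup this
        exact ⟨x, by simpa [lt_div_iff₀ Fp] using hx⟩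
      · have : s * G < G := by nlinarith
        obtain ⟨x, hx⟩ := exists_lt_of_lt_ciSup this
        exact ⟨x, by simpa [lt_div_iff₀ Gp] using hx⟩
      · intro a ha b hb
        simp only [mem_ofPred_eq, lt_div_iff₀ Fp, lt_div_iff₀ Gp, le_div_iff₀ Np] at ha hb ⊢
        have p1 : 0 < s * F := by positivity
        have p2 : 0 < s * G := by positivity
        rw [hN, ← Nm_smul k hs Fp Gp]
        exact (Nm_mono _ p1 p2 ha.le hb.le).trans (hyp a b (p1.trans ha) (p2.trans hb))
    · have e1 : {x | s < f x / F} = ∅ := by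
        ext x; simp only [mem_ofPred_eq, mem_empty_iff_false, iff_false, not_lt]
        exact ((div_le_one Fp).2 (le_ciSup bf x)).trans h1
      have e2 : {x | s < g x / G} = ∅ := by
        ext x; simp only [mem_ofPred_eq, mem_empty_iff_false, iff_false, not_lt]
        exact ((div_le_one Gp).2 (le_ciSup bg x)).trans h1
      simp [e1, e2]
  have hI : 0 ≤ ∫ x, h x := integral_nonneg h0
  rw [← ENNReal.ofReal_add (by positivity) (by positivity), show (2:ENNReal) = ENNReal.ofReal 2 by simp,
    ← ENNReal.ofReal_mul (by norm_num), ENNReal.ofReal_le_ofReal_iff (by positivity)] at key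
  refine (Nm_holder k Fp Gp pf pg).trans ?_
  rw [← hN]
  calc N * (((∫ x, f x)/F + (∫ x, g x)/G)/2) ≤ N * ((∫ x, h x)/N) := mul_le_mul_of_nonneg_left (by linarith) Np.le
    _ = _ := by field_simp


def Gd {n : ℕ} (f : (Fin n → ℝ) → ℝ) : Prop :=
  Measurable f ∧ ∃ C R : ℝ, ∀ x, 0 ≤ f x ∧ f x ≤ C ∧ (f x ≠ 0 → ‖x‖ ≤ R)

lemma bdd_integrable {X : Type*} [NormedAddCommGroup X] [MeasurableSpace X] [BorelSpace X] [ProperSpace X]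
    (μ : Measure X) [IsFiniteMeasureOnCompacts μ] {f : X → ℝ} (mf : Measurable f) {C R : ℝ}
    (h : ∀ x, 0 ≤ f x ∧ f x ≤ C ∧ (f x ≠ 0 → ‖x‖ ≤ R)) : Integrable f μ := by
  have : IntegrableOn f (Metric.closedBall 0 R) μ :=
    Measure.integrableOn_of_bounded (M := C) (isCompact_closedBall _ _).measure_lt_top.ne
      mf.aestronglyMeasurable (Filter.Eventually.of_forall fun x => by
        rw [Real.norm_of_nonneg (h x).1]; exact (h x).2.1)
  rwa [integrableOn_iff_integrable_of_support_subset] at this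
  intro x hx
  simpa using (h x).2.2 hx

lemma Gd.integrable {n : ℕ} {f : (Fin n → ℝ) → ℝ} (hf : Gd f) : Integrable f := by
  obtain ⟨mf, C, R, h⟩ := hf
  exact bdd_integrable _ mf h

lemma meas_cons (d : ℕ) : Measurable fun p : ℝ × (Fin d → ℝ) => (Fin.cons p.1 p.2 : Fin (d+1) → ℝ) := by
  rw [measurable_pi_iff]
  intro i
  refine Fin.cases ?_ (fun j => ?_) i
  · simpa using measurable_fst
  · simp only [Fin.cons_succ]; fun_prop

lemma int_cons {d : ℕ} {f : (Fin (d+1) → ℝ) → ℝ} (hf : Gd f) :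
    ∫ x, f x = ∫ x' : Fin d → ℝ, ∫ t : ℝ, f (Fin.cons t x') := by
  have h := (volume_preserving_piFinSuccAbove (fun _ : Fin (d + 1) => ℝ) 0).symm
  have e : ∀ p : ℝ × (Fin d → ℝ), (MeasurableEquiv.piFinSuccAbove (fun _ : Fin (d + 1) => ℝ) 0).symm p = Fin.cons p.1 p.2 := by
    intro p; simp [MeasurableEquiv.piFinSuccAbove]; rfl
  rw [← h.integral_comp (MeasurableEquiv.measurableEmbedding _)]
  simp only [e]
  have hi : Integrable (fun p : ℝ × (Fin d → ℝ) => f (Fin.cons p.1 p.2)) := by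
    have := (h.integrable_comp_emb (MeasurableEquiv.measurableEmbedding _)).2 hf.integrable
    refine this.congr (Filter.Eventually.of_forall fun p => ?_)
    simp only [Function.comp, e]
  exact integral_prod_symm _ hi

lemma cons_norm {d : ℕ} (t : ℝ) (x : Fin d → ℝ) {R : ℝ} (h : ‖(Fin.cons t x : Fin (d+1) → ℝ)‖ ≤ R) : |t| ≤ R ∧ ‖x‖ ≤ R := by
  have hR : 0 ≤ R := (norm_nonneg _).trans h
  rw [pi_norm_le_iff_of_nonneg hR] at h
  refine ⟨by simpa using h 0, ?_⟩
  rw [pi_norm_le_iff_of_nonneg hR]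
  intro i
  simpa using h i.succ

lemma slice_bd {d : ℕ} {f : (Fin (d+1) → ℝ) → ℝ} {C R : ℝ} (h : ∀ x, 0 ≤ f x ∧ f x ≤ C ∧ (f x ≠ 0 → ‖x‖ ≤ R)) (x : Fin d → ℝ) :
    ∀ t : ℝ, 0 ≤ f (Fin.cons t x) ∧ f (Fin.cons t x) ≤ C ∧ (f (Fin.cons t x) ≠ 0 → ‖t‖ ≤ R) := fun t =>
  ⟨(h _).1, (h _).2.1, fun hh => (cons_norm t x ((h _).2.2 hh)).1⟩

lemma slice_meas {d : ℕ} {f : (Fin (d+1) → ℝ) → ℝ} (mf : Measurable f) (x : Fin d → ℝ) :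
    Measurable fun t : ℝ => f (Fin.cons t x) :=
  mf.comp ((meas_cons d).comp (measurable_id.prodMk measurable_const))

lemma Gd.marg {d : ℕ} {f : (Fin (d+1) → ℝ) → ℝ} (hf : Gd f) : Gd fun x' : Fin d → ℝ => ∫ t : ℝ, f (Fin.cons t x') := by
  obtain ⟨mf, C, R, h⟩ := hf
  refine ⟨?_, C * volume.real (Metric.closedBall (0:ℝ) R), R, fun x => ⟨integral_nonneg fun t => (h _).1, ?_, ?_⟩⟩
  · have := (mf.comp (meas_cons d)).stronglyMeasurable
    exact (this.integral_prod_left').measurable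
  · show ∫ t : ℝ, f (Fin.cons t x) ≤ _
    rw [← setIntegral_eq_integral_of_forall_compl_eq_zero (s := Metric.closedBall (0:ℝ) R)]
    · have := norm_setIntegral_le_of_norm_le_const (μ := volume) (s := Metric.closedBall (0:ℝ) R) (C := C) (f := fun t => f (Fin.cons t x))
        (isCompact_closedBall _ _).measure_lt_top (fun t _ => by rw [Real.norm_of_nonneg (h _).1]; exact (h _).2.1)
      exact (le_abs_self _).trans this
    · intro t ht
      by_contra hne
      exact ht (by simpa using (slice_bd h x t).2.2 hne)
  · intro hne
    by_contra hx
    apply hne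
    have : ∀ t : ℝ, f (Fin.cons t x) = 0 := by
      intro t; by_contra h1
      exact hx (cons_norm t x ((h _).2.2 h1)).2
    simp [this]

lemma bbl (d : ℕ) : ∀ {f g h : (Fin d → ℝ) → ℝ}, Gd f → Gd g → Gd h →
    (∀ x y, 0 < f x → 0 < g y → Nm d (f x) (g y) ≤ h ((1/2:ℝ) • (x + y))) →
    0 < ∫ x, f x → 0 < ∫ x, g x → min (∫ x, f x) (∫ x, g x) ≤ ∫ x, h x := by
  induction d with
  | zero =>
    intro f g h hf hg hh hyp pf pg
    have e : ∀ u : (Fin 0 → ℝ) → ℝ, ∫ x, u x = u 0 := by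
      intro u
      rw [volume_pi, Measure.pi_of_empty (x := 0), integral_dirac]
    rw [e] at pf pg
    rw [e, e, e]
    have := hyp 0 0 pf pg
    simpa [Nm] using this
  | succ d ih =>
    intro f g h hf hg hh hyp pf pg
    rw [int_cons hf] at pf
    rw [int_cons hg] at pg
    rw [int_cons hf, int_cons hg, int_cons hh]
    refine ih hf.marg hg.marg hh.marg (fun x y px py => ?_) pf pg
    obtain ⟨mf, C, R, bf⟩ := hf
    obtain ⟨mg, C', R', bg⟩ := hg
    obtain ⟨mh, C'', R'', bh⟩ := hh
    refine bbl1 d (C := max C C') (slice_meas mf x) (slice_meas mg y) (fun t => (bf _).1) (fun t => (bg _).1) (fun t => (bh _).1)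
      (bdd_integrable _ (slice_meas mf x) (slice_bd bf x)) (bdd_integrable _ (slice_meas mg y) (slice_bd bg y))
      (bdd_integrable _ (slice_meas mh _) (slice_bd bh _)) (fun t => (bf _).2.1.trans (le_max_left _ _))
      (fun t => (bg _).2.1.trans (le_max_right _ _)) (fun s t ps pt => ?_) px py
    have := hyp _ _ ps pt
    convert this using 2
    ext i
    refine Fin.cases ?_ (fun j => ?_) i
    · simp; ring
    · simp; ring

lemma bbl_euc (d : ℕ) {f g h : EuclideanSpace ℝ (Fin d) → ℝ} (mf : Measurable f) (mg : Measurable g) (mh : Measurable h)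
    {C R : ℝ} (bf : ∀ x, 0 ≤ f x ∧ f x ≤ C ∧ (f x ≠ 0 → ‖x‖ ≤ R)) (bg : ∀ x, 0 ≤ g x ∧ g x ≤ C ∧ (g x ≠ 0 → ‖x‖ ≤ R))
    (bh : ∀ x, 0 ≤ h x ∧ h x ≤ C ∧ (h x ≠ 0 → ‖x‖ ≤ R))
    (hyp : ∀ x y, 0 < f x → 0 < g y → Nm d (f x) (g y) ≤ h ((1/2:ℝ) • (x + y)))
    (pf : 0 < ∫ x, f x) (pg : 0 < ∫ x, g x) : min (∫ x, f x) (∫ x, g x) ≤ ∫ x, h x := by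
  have vp := PiLp.volume_preserving_toLp (Fin d)
  have me : MeasurableEmbedding (@WithLp.toLp 2 (Fin d → ℝ)) := (MeasurableEquiv.toLp 2 (Fin d → ℝ)).measurableEmbedding
  have e : ∀ u : EuclideanSpace ℝ (Fin d) → ℝ, ∫ x, u x = ∫ x : Fin d → ℝ, u (WithLp.toLp 2 x) := fun u =>
    (vp.integral_comp me u).symm
  have gd : ∀ u : EuclideanSpace ℝ (Fin d) → ℝ, Measurable u → (∀ x, 0 ≤ u x ∧ u x ≤ C ∧ (u x ≠ 0 → ‖x‖ ≤ R)) →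
      Gd fun x : Fin d → ℝ => u (WithLp.toLp 2 x) := by
    intro u mu bu
    refine ⟨mu.comp vp.measurable, C, R, fun x => ⟨(bu _).1, (bu _).2.1, fun hx => ?_⟩⟩
    have h1 := (bu _).2.2 hx
    rw [pi_norm_le_iff_of_nonneg ((norm_nonneg _).trans h1)]
    intro i
    exact (PiLp.norm_apply_le (WithLp.toLp 2 x) i).trans h1
  rw [e] at pf pg
  rw [e, e, e]
  refine bbl d (gd f mf bf) (gd g mg bg) (gd h mh bh) (fun x y px py => ?_) pf pg
  have := hyp _ _ px py
  simpa using this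


noncomputable def lc (u : ℝ) : ℝ := Real.log (Real.cosh u)

lemma lc_deriv (u : ℝ) : HasDerivAt lc (Real.tanh u) u := by
  have := (Real.hasDerivAt_cosh u).log (Real.cosh_pos u).ne'
  rw [Real.tanh_eq_sinh_div_cosh]
  exact this

lemma lc_convex : ConvexOn ℝ univ lc := by
  have hd : deriv lc = Real.tanh := funext fun u => (lc_deriv u).deriv
  refine Monotone.convexOn_univ_of_deriv (fun u => (lc_deriv u).differentiableAt) ?_
  rw [hd]
  have h2 : ∀ u, HasDerivAt Real.tanh (1 / Real.cosh u ^ 2) u := by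
    intro u
    have := (Real.hasDerivAt_sinh u).div (Real.hasDerivAt_cosh u) (Real.cosh_pos u).ne'
    have e : Real.tanh = fun y => Real.sinh y / Real.cosh y := funext fun y => Real.tanh_eq_sinh_div_cosh y
    rw [e]
    refine HasDerivAt.congr_deriv this ?_
    have h3 := Real.cosh_sq u
    rw [show Real.cosh u * Real.cosh u - Real.sinh u * Real.sinh u = 1 by linear_combination h3]
  refine monotone_of_deriv_nonneg (fun u => (h2 u).differentiableAt) fun u => ?_
  rw [(h2 u).deriv]; positivity

lemma lc_nonneg (u : ℝ) : 0 ≤ lc u := Real.log_nonneg (Real.one_le_cosh u)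

lemma lc_even (u : ℝ) : lc (-u) = lc u := by simp [lc]

lemma lc_lower (u : ℝ) : u^2/2 - u^4/8 ≤ lc u := by
  have h1 : 1 + u^2/2 ≤ Real.cosh u := by
    have h : ∀ v : ℝ, 0 ≤ v → 1 + v^2/2 ≤ Real.cosh v := by
      intro v hv
      have := Real.cosh_sq' (v/2)
      have h2 := Real.self_le_sinh_iff.2 (show 0 ≤ v/2 by linarith)
      have h3 := Real.cosh_two_mul (v/2)
      rw [show 2 * (v/2) = v by ring] at h3
      nlinarith
    have := h |u| (abs_nonneg _)
    simpa using this
  have h2 : Real.log (1 + u^2/2) ≤ lc u := Real.log_le_log (by positivity) h1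
  have h3 := Real.le_log_one_add_of_nonneg (show 0 ≤ u^2/2 by positivity)
  refine le_trans ?_ (h3.trans h2)
  rw [le_div_iff₀ (by positivity)]
  nlinarith [pow_nonneg (sq_nonneg u) 3]

lemma expconc {p R : ℝ} (hp : 1 < p) (hR : 0 < R) :
    ConcaveOn ℝ (Icc 0 R) fun r : ℝ => Real.exp (-((p-1)/R^p) * (r^p/p)) := by
  set β := (p-1)/R^p with hβ
  have hβp : 0 < β := div_pos (by linarith) (by positivity)
  refine concaveOn_of_hasDerivWithinAt2_nonpos (convex_Icc 0 R)
    (f' := fun r => - β * (r^(p-1) * Real.exp (-β * (r^p/p))))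
    (f'' := fun r => - β * (((p-1) * r^(p-1-1)) * Real.exp (-β * (r^p/p)) + r^(p-1) * (Real.exp (-β * (r^p/p)) * (-β * r^(p-1)))))
    ?_ ?_ ?_ ?_
  · have : Continuous fun r : ℝ => r ^ p := Real.continuous_rpow_const (by linarith)
    fun_prop
  · intro x hx
    rw [interior_Icc] at hx
    have h1 := ((Real.hasDerivAt_rpow_const (x := x) (p := p) (Or.inl hx.1.ne')).div_const p).const_mul (-β) |>.exp
    refine HasDerivAt.hasDerivWithinAt ?_
    refine HasDerivAt.congr_deriv h1 ?_
    have : p ≠ 0 := by linarith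
    field_simp
  · intro x hx
    rw [interior_Icc] at hx
    have h1 := ((Real.hasDerivAt_rpow_const (x := x) (p := p) (Or.inl hx.1.ne')).div_const p).const_mul (-β) |>.exp
    have h2 := (Real.hasDerivAt_rpow_const (x := x) (p := p-1) (Or.inl hx.1.ne'))
    refine HasDerivAt.hasDerivWithinAt ?_
    refine HasDerivAt.congr_deriv ((h2.mul h1).const_mul (-β)) ?_
    have : p ≠ 0 := by linarith
    field_simp
  · intro x hx
    rw [interior_Icc] at hx
    have e1 : x^(p-1) * x^(p-1) = x^(p-1-1) * x^p := by
      rw [← Real.rpow_add hx.1, ← Real.rpow_add hx.1]; congr 1; ring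
    have e2 : β * x^p ≤ p-1 := by
      rw [hβ, div_mul_eq_mul_div, div_le_iff₀ (by positivity)]
      have : x^p ≤ R^p := Real.rpow_le_rpow hx.1.le hx.2.le (by linarith)
      nlinarith
    have e3 : 0 < x^(p-1-1) := by have := hx.1; positivity
    have e4 := Real.exp_pos (-β * (x^p/p))
    have : (((p-1) * x^(p-1-1)) * Real.exp (-β * (x^p/p)) + x^(p-1) * (Real.exp (-β * (x^p/p)) * (-β * x^(p-1))))
        = x^(p-1-1) * Real.exp (-β * (x^p/p)) * ((p-1) - β * x^p) := by
      linear_combination (-β * Real.exp (-β * (x^p/p))) * e1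
    rw [this]
    have : 0 ≤ x^(p-1-1) * Real.exp (-β * (x^p/p)) * ((p-1) - β * x^p) :=
      mul_nonneg (by positivity) (by linarith)
    nlinarith

lemma Dbound {p R : ℝ} (hp : 1 < p) (hR : 0 < R) {x y z : ℝ} (hx : x ∈ Icc 0 R) (hy : y ∈ Icc 0 R)
    (hz : 0 ≤ z) (hzz : z ≤ (x+y)/2) :
    lc (((p-1)/R^p) * (y^p/p - x^p/p)/2) / ((p-1)/R^p) ≤ (x^p/p + y^p/p)/2 - z^p/p := by
  have hc := (expconc hp hR).2 hx hy (show (0:ℝ) ≤ 1/2 by norm_num) (show (0:ℝ) ≤ 1/2 by norm_num) (by norm_num)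
  set β := (p-1)/R^p with hβ
  have hβp : 0 < β := div_pos (by linarith) (by positivity)
  simp only [smul_eq_mul] at hc
  have hzp : z^p ≤ (1/2*x+1/2*y)^p := Real.rpow_le_rpow hz (by linarith) (by linarith)
  have h1 : Real.exp (-β * ((1/2*x+1/2*y)^p/p)) ≤ Real.exp (-β * (z^p/p)) := by
    apply Real.exp_le_exp.2
    have : z^p/p ≤ (1/2*x+1/2*y)^p/p := by gcongr
    nlinarith
  have h2 : 1/2 * Real.exp (-β * (x^p/p)) + 1/2 * Real.exp (-β * (y^p/p)) =
      Real.exp (-β * ((x^p/p + y^p/p)/2)) * Real.cosh (β * (y^p/p - x^p/p)/2) := by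
    have e1 : Real.exp (-β * (x^p/p)) = Real.exp (-β * ((x^p/p + y^p/p)/2)) * Real.exp (β * (y^p/p - x^p/p)/2) := by
      rw [← Real.exp_add]; ring_nf
    have e2 : Real.exp (-β * (y^p/p)) = Real.exp (-β * ((x^p/p + y^p/p)/2)) * Real.exp (-(β * (y^p/p - x^p/p)/2)) := by
      rw [← Real.exp_add]; ring_nf
    rw [Real.cosh_eq, e1, e2]
    ring
  have h3 := (h2 ▸ hc).trans h1
  have h4 := Real.log_le_log (by positivity) h3
  rw [Real.log_mul (Real.exp_pos _).ne' (Real.cosh_pos _).ne', Real.log_exp, Real.log_exp] at h4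
  rw [div_le_iff₀ hβp]
  unfold lc
  linarith

noncomputable def Gf (ν p r : ℝ) : ℝ := (p-1)/(r^p + ν*(p-1))

lemma lc_jensen {ν β a w : ℝ} (hν : 0 < ν) (hβ : 0 < β) :
    (ν + 1/β) * lc ((a/2)/(ν + 1/β)) ≤ ν * lc ((w + a)/(2*ν)) + lc (β * w / 2)/β := by
  have hs : 0 < ν + 1/β := by positivity
  have := lc_convex.2 (mem_univ ((w+a)/(2*ν))) (mem_univ (-(β*w/2))) (show 0 ≤ ν/(ν+1/β) by positivity)
    (show 0 ≤ (1/β)/(ν+1/β) by positivity) (by field_simp)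
  simp only [smul_eq_mul, lc_even] at this
  have e : ν / (ν + 1 / β) * ((w + a) / (2 * ν)) + 1 / β / (ν + 1 / β) * -(β * w / 2) = (a/2)/(ν + 1/β) := by
    field_simp; ring
  rw [e] at this
  calc _ ≤ (ν + 1/β) * (ν / (ν + 1 / β) * lc ((w + a) / (2 * ν)) + 1 / β / (ν + 1 / β) * lc (β * w / 2)) := by gcongr
    _ = _ := by field_simp

lemma Gf_cont {ν p : ℝ} (hν : 0 < ν) (hp : 1 < p) : ContinuousOn (Gf ν p) (Ici 0) := by
  unfold Gf
  have : Continuous fun r : ℝ => r ^ p := Real.continuous_rpow_const (by linarith)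
  refine ContinuousOn.div (by fun_prop) (by fun_prop) fun x hx => ?_
  have h1 : 0 ≤ x^p := Real.rpow_nonneg hx p
  have : 0 < ν * (p-1) := mul_pos hν (by linarith)
  positivity

lemma Gf_bd {ν p r : ℝ} (hν : 0 < ν) (hp : 1 < p) (hr : 0 ≤ r) : 0 ≤ Gf ν p r ∧ Gf ν p r ≤ 1/ν := by
  unfold Gf
  have h1 : 0 ≤ r^p := Real.rpow_nonneg hr p
  have h2 : 0 < ν * (p-1) := mul_pos hν (by linarith)
  refine ⟨div_nonneg (by linarith) (by positivity), ?_⟩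
  rw [div_le_div_iff₀ (by positivity) hν]
  linarith

lemma rpow_strict {p x y z : ℝ} (hp : 1 < p) (hx : 0 ≤ x) (hy : 0 ≤ y) (hz : 0 ≤ z) (hzz : z ≤ (x+y)/2)
    (hm : z < max x y) : 0 < (x^p/p + y^p/p)/2 - z^p/p := by
  have hpp : 0 < p := by linarith
  have key : z^p < (x^p + y^p)/2 := by
    rcases eq_or_ne x y with rfl | hne
    · rw [max_self] at hm
      have := Real.rpow_lt_rpow hz hm hpp
      linarith
    · have h1 := (strictConvexOn_rpow hp).2 (mem_Ici.2 hx) (mem_Ici.2 hy) hne (show (0:ℝ) < 1/2 by norm_num) (show (0:ℝ) < 1/2 by norm_num) (by norm_num)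
      simp only [smul_eq_mul] at h1
      have h2 : z^p ≤ (1/2*x+1/2*y)^p := Real.rpow_le_rpow hz (by linarith) hpp.le
      linarith
  have : (x^p/p + y^p/p)/2 - z^p/p = ((x^p+y^p)/2 - z^p)/p := by field_simp
  rw [this]
  exact div_pos (by linarith) hpp

lemma far {p R ρ : ℝ} (hp : 1 < p) (hρ : 0 < ρ) : ∃ c > 0, ∀ x ∈ Icc 0 R, ∀ y ∈ Icc 0 R, ∀ z ∈ Icc 0 R,
    z ≤ (x+y)/2 → z + ρ ≤ max x y → c ≤ (x^p/p + y^p/p)/2 - z^p/p := by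
  set S : Set (ℝ × ℝ × ℝ) := (Icc 0 R ×ˢ (Icc 0 R ×ˢ Icc 0 R)) ∩ {q | q.2.2 ≤ (q.1 + q.2.1)/2 ∧ q.2.2 + ρ ≤ max q.1 q.2.1}
  have hS : IsCompact S := by
    refine (isCompact_Icc.prod (isCompact_Icc.prod isCompact_Icc)).inter_right ?_
    have c1 : IsClosed {q : ℝ × ℝ × ℝ | q.2.2 ≤ (q.1 + q.2.1)/2} := isClosed_le (by fun_prop) (by fun_prop)
    have c2 : IsClosed {q : ℝ × ℝ × ℝ | q.2.2 + ρ ≤ max q.1 q.2.1} := isClosed_le (by fun_prop) (by fun_prop)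
    exact c1.inter c2
  rcases S.eq_empty_or_nonempty with hE | hN
  · refine ⟨1, one_pos, fun x hx y hy z hz h1 h2 => ?_⟩
    have : (x,y,z) ∈ S := ⟨⟨hx,hy,hz⟩,h1,h2⟩
    simp [hE] at this
  · have hc : Continuous fun r : ℝ => r ^ p := Real.continuous_rpow_const (by linarith)
    obtain ⟨q, hq, hmin⟩ := hS.exists_isMinOn hN (f := fun q : ℝ × ℝ × ℝ => (q.1^p/p + q.2.1^p/p)/2 - q.2.2^p/p)
      (by
        have h1 : Continuous fun q : ℝ × ℝ × ℝ => q.1^p := hc.comp continuous_fst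
        have h2 : Continuous fun q : ℝ × ℝ × ℝ => q.2.1^p := hc.comp (by fun_prop)
        have h3 : Continuous fun q : ℝ × ℝ × ℝ => q.2.2^p := hc.comp (by fun_prop)
        fun_prop)
    refine ⟨_, rpow_strict hp hq.1.1.1 hq.1.2.1.1 hq.1.2.2.1 hq.2.1 (by have := hq.2.2; linarith), ?_⟩
    intro x hx y hy z hz h1 h2
    exact hmin (show (x,y,z) ∈ S from ⟨⟨hx,hy,hz⟩,h1,h2⟩)

lemma pointwise {ν p R η : ℝ} (hν : 1 ≤ ν) (hp : 1 < p) (hη : 0 < η) : ∃ a0 > 0, ∀ a : ℝ, |a| ≤ a0 →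
    ∀ x ∈ Icc 0 R, ∀ y ∈ Icc 0 R, ∀ z, 0 ≤ z → z ≤ (x+y)/2 →
    (Gf ν p z - η) * a^2/8 ≤ (x^p/p + y^p/p)/2 - z^p/p + ν * lc ((y^p/p - x^p/p + a)/(2*ν)) := by
  have hν0 : 0 < ν := by linarith
  have huc : UniformContinuousOn (Gf ν p) (Icc 0 (R+1)) :=
    isCompact_Icc.uniformContinuousOn_of_continuous ((Gf_cont hν0 hp).mono fun x hx => hx.1)
  rw [Metric.uniformContinuousOn_iff] at huc
  obtain ⟨δ, hδ, huc⟩ := huc (η/2) (by positivity)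
  set ρ := min (δ/4) (1/2) with hρd
  have hρ : 0 < ρ := by positivity
  have hρ1 : ρ ≤ δ/4 := min_le_left _ _
  have hρ2 : ρ ≤ 1/2 := min_le_right _ _
  obtain ⟨c, hc, hfar⟩ := far (R := R) hp hρ
  refine ⟨√(min (8*ν*c) (8*η)), Real.sqrt_pos.2 (by positivity), fun a ha x hx y hy z hz hzz => ?_⟩
  have ha2 : a^2 ≤ min (8*ν*c) (8*η) := by
    rw [← sq_abs]
    exact (Real.le_sqrt (abs_nonneg _) (by positivity)).1 ha
  have ha3 : a^2 ≤ 8*ν*c := ha2.trans (min_le_left _ _)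
  have ha4 : a^2 ≤ 8*η := ha2.trans (min_le_right _ _)
  have hzR : z ≤ R := by linarith [hx.2, hy.2]
  have hzm : z ≤ max x y := by
    have := le_max_left x y; have := le_max_right x y; linarith
  rcases le_or_gt (z + ρ) (max x y) with hf | hn
  · have h1 := hfar x hx y hy z ⟨hz, hzR⟩ hzz hf
    have h2 := lc_nonneg ((y^p/p - x^p/p + a)/(2*ν))
    have h3 : (Gf ν p z - η) * a^2/8 ≤ c := by
      have g := (Gf_bd hν0 hp hz).2
      have : (Gf ν p z - η) * a^2 ≤ 1/ν * a^2 := by gcongr; linarith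
      have : 1/ν * a^2 ≤ 1/ν * (8*ν*c) := by gcongr
      have e : 1/ν * (8*ν*c) = 8*c := by field_simp
      linarith
    have := mul_nonneg hν0.le h2
    linarith
  · set R' := max x y + ρ with hR'
    have hmx := le_max_left x y
    have hmy := le_max_right x y
    have hR'p : 0 < R' := by have := hx.1; linarith
    have hmR : max x y ≤ R := max_le hx.2 hy.2
    have h1 := Dbound hp hR'p (x := x) (y := y) ⟨hx.1, by linarith⟩ ⟨hy.1, by linarith⟩ hz hzz
    have hβ : 0 < (p-1)/R'^p := div_pos (by linarith) (by positivity)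
    have h2 := lc_jensen (a := a) (w := y^p/p - x^p/p) hν0 hβ
    have hG : Gf ν p R' = 1/(ν + 1/((p-1)/R'^p)) := by
      unfold Gf
      have : p - 1 ≠ 0 := by linarith
      field_simp
      ring
    have hd := huc z ⟨hz, by linarith⟩ R' ⟨hR'p.le, by linarith⟩ (by
      rw [Real.dist_eq, abs_lt]; constructor <;> linarith)
    rw [Real.dist_eq, abs_lt] at hd
    have hgb := Gf_bd hν0 hp hR'p.le
    have hgp : 0 < Gf ν p R' := by rw [hG]; positivity
    set g := Gf ν p R' with hg
    have hg1 : g ≤ 1 := hgb.2.trans (by rw [div_le_one hν0]; exact hν)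
    have e1 : ν + 1/((p-1)/R'^p) = 1/g := by rw [hG]; simp
    rw [e1] at h2
    have e2 : (a/2)/(1/g) = g * a/2 := by field_simp
    rw [e2] at h2
    have h3 := lc_lower (g*a/2)
    have h4 : g*a^2/8 - g^3*a^4/128 ≤ 1/g * lc (g*a/2) := by
      calc g*a^2/8 - g^3*a^4/128 = 1/g * ((g*a/2)^2/2 - (g*a/2)^4/8) := by field_simp; ring
        _ ≤ _ := by gcongr
    have h5 : g^3*a^4/128 ≤ (η/2) * a^2/8 := by
      have : g^3 ≤ 1 := pow_le_one₀ hgp.le hg1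
      have h6 : g^3 * a^4 ≤ 1 * a^4 := by gcongr
      nlinarith [sq_nonneg a]
    have h7 : (Gf ν p z - η) * a^2/8 ≤ (g - η/2)*a^2/8 := by
      have : Gf ν p z - η ≤ g - η/2 := by linarith
      gcongr
    linarith



lemma shiftIoi (g : ℝ → ℝ) : ∫ y in Ioi (0:ℝ), g (1 + y) = ∫ y in Ioi (1:ℝ), g y := by
  rw [← integral_indicator measurableSet_Ioi, ← integral_indicator measurableSet_Ioi]
  rw [← integral_add_left_eq_self (μ := volume) (fun y => (Ioi (1:ℝ)).indicator g y) (1:ℝ)]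
  congr 1
  ext y
  by_cases h : 0 < y
  · simp [indicator, h]
  · simp [indicator, h]

lemma uig {s x : ℝ} (hx : 0 < x) :
    ∫ y in Ioi (0:ℝ), Real.exp (-x*y) * (1+y)^(-s) = Real.exp x * x^(s-1) * uiGamma (1-s) x := by
  have h1 := shiftIoi (fun v => Real.exp x * (Real.exp (-(x*v)) * v^(-s)))
  have h2 := integral_comp_mul_left_Ioi (fun t => t^(-s) * Real.exp (-t)) 1 hx
  have e1 : ∫ y in Ioi (0:ℝ), Real.exp (-x*y) * (1+y)^(-s) =
      ∫ y in Ioi (0:ℝ), Real.exp x * (Real.exp (-(x*(1+y))) * (1+y)^(-s)) := by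
    congr 1; ext y
    rw [← mul_assoc, ← Real.exp_add]; congr 2; ring
  rw [e1, h1]
  have e2 : ∫ v in Ioi (1:ℝ), Real.exp x * (Real.exp (-(x*v)) * v^(-s)) =
      ∫ v in Ioi (1:ℝ), Real.exp x * x^s * ((x*v)^(-s) * Real.exp (-(x*v))) := by
    apply setIntegral_congr_fun measurableSet_Ioi
    intro v hv
    have hv0 : (0:ℝ) < v := lt_trans one_pos hv
    simp only
    rw [Real.mul_rpow hx.le hv0.le, Real.rpow_neg hx.le]
    have := (Real.rpow_pos_of_pos hx s).ne'
    field_simp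
  rw [e2, integral_const_mul, h2, uiGamma, smul_eq_mul, mul_one, Real.rpow_sub_one hx.ne']
  have : (1 - s - 1) = -s := by ring
  rw [this]
  field_simp

noncomputable def alp (ν p : ℝ) : ℝ := (1 / ν) * Real.exp ((p - 1) * ν / p) * ((p - 1) * ν / p) ^ (ν / p) *
      uiGamma (1 - ν / p) ((p - 1) * ν / p)

lemma radial_int {ν p : ℝ} (hν : 0 < ν) (hp : 1 < p) :
    IntegrableOn (fun r => r^(ν-1) * Real.exp (-r^p/p)) (Ioi 0) := by
  have := integrableOn_rpow_mul_exp_neg_mul_rpow (p := p) (s := ν-1) (b := 1/p) (by linarith) (by linarith) (by positivity)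
  convert! this using 3
  ring_nf

lemma radial_eq {ν p : ℝ} (hν : 0 < ν) (hp : 1 < p) :
    ∫ r in Ioi (0:ℝ), r^(ν-1) * Real.exp (-r^p/p) * Gf ν p r =
      alp ν p * ∫ r in Ioi (0:ℝ), r^(ν-1) * Real.exp (-r^p/p) := by
  have hp0 : 0 < p := by linarith
  set x := (p-1)*ν/p with hxd
  have hx : 0 < x := by have : 0 < p - 1 := by linarith
                        positivity
  set I0 := ∫ r in Ioi (0:ℝ), r^(ν-1) * Real.exp (-r^p/p) with hI0
  set w : ℝ → ℝ := fun r => r^(ν-1) * Real.exp (-r^p/p)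
  have hw := radial_int hν hp
  let F : ℝ → ℝ → ℝ := fun r y => w r * Real.exp (-(r^p/p + x)*y)
  have s1 : ∀ r ∈ Ioi (0:ℝ), w r * Gf ν p r = (p-1)/p * ∫ y in Ioi (0:ℝ), F r y := by
    intro r hr
    have hr' : (0:ℝ) < r := hr
    have hb : 0 < r^p/p + x := by positivity
    simp only [F]
    rw [integral_const_mul, integral_exp_mul_Ioi (by linarith)]
    simp only [mul_zero, Real.exp_zero, Gf]
    have h1 : r^p/p + x = (r^p + ν*(p-1))/p := by rw [hxd]; field_simp
    have h2 : 0 < r^p + ν*(p-1) := by have : 0 < p - 1 := by linarith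
                                      positivity
    rw [h1]
    field_simp
  have s2 : ∀ y ∈ Ioi (0:ℝ), ∫ r in Ioi (0:ℝ), F r y = Real.exp (-x*y) * (1+y)^(-(ν/p)) * I0 := by
    intro y hy
    have hy' : (0:ℝ) < y := hy
    have a1 := integral_rpow_mul_exp_neg_mul_rpow (p := p) (q := ν-1) (b := (1+y)/p) hp0 (by linarith) (by positivity)
    have a2 := integral_rpow_mul_exp_neg_mul_rpow (p := p) (q := ν-1) (b := 1/p) hp0 (by linarith) (by positivity)
    have a3 : I0 = ∫ r in Ioi (0:ℝ), r^(ν-1) * Real.exp (-(1/p) * r^p) := by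
      rw [hI0]; congr 1; ext r; simp only [w]; congr 2; ring
    have a4 : ∫ r in Ioi (0:ℝ), F r y = Real.exp (-x*y) * ∫ r in Ioi (0:ℝ), r^(ν-1) * Real.exp (-((1+y)/p) * r^p) := by
      rw [← integral_const_mul]; congr 1; ext r
      simp only [F, w]
      rw [mul_assoc, ← Real.exp_add, mul_left_comm, ← Real.exp_add]
      congr 2; ring
    rw [a4, a1, a3, a2]
    have : (1+y)/p = (1+y)*(1/p) := by ring
    rw [this, Real.mul_rpow (by positivity) (by positivity)]
    have : -(ν - 1 + 1)/p = -(ν/p) := by ring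
    rw [this]; ring
  have mF : Measurable (Function.uncurry F) := by
    simp only [F, w, Function.uncurry_def]
    fun_prop
  have iF : Integrable (Function.uncurry F) ((volume.restrict (Ioi 0)).prod (volume.restrict (Ioi 0))) := by
    have h1 := hw.integrable.mul_prod (exp_neg_integrableOn_Ioi 0 hx).integrable
    refine h1.mono' mF.aestronglyMeasurable ?_
    rw [Measure.prod_restrict]
    filter_upwards [ae_restrict_mem (measurableSet_Ioi.prod measurableSet_Ioi)] with z hz
    obtain ⟨h1, h2⟩ := hz
    have h1' : 0 < z.1 := h1
    have h2' : 0 < z.2 := h2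
    simp only [Function.uncurry_def, F, w]
    rw [Real.norm_of_nonneg (by positivity)]
    gcongr
    have : 0 ≤ z.1^p/p * z.2 := by positivity
    nlinarith
  calc ∫ r in Ioi (0:ℝ), w r * Gf ν p r = ∫ r in Ioi (0:ℝ), (p-1)/p * ∫ y in Ioi (0:ℝ), F r y :=
        setIntegral_congr_fun measurableSet_Ioi s1
    _ = (p-1)/p * ∫ y in Ioi (0:ℝ), ∫ r in Ioi (0:ℝ), F r y := by
        rw [integral_const_mul, integral_integral_swap iF]
    _ = (p-1)/p * ∫ y in Ioi (0:ℝ), Real.exp (-x*y) * (1+y)^(-(ν/p)) * I0 := by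
        rw [setIntegral_congr_fun measurableSet_Ioi s2]
    _ = alp ν p * I0 := by
        rw [integral_mul_const, uig hx, alp, ← hxd, Real.rpow_sub_one hx.ne']
        have : p - 1 ≠ 0 := by linarith
        have hh : 1/ν = (p-1)/p/x := by rw [hxd]; field_simp
        rw [hh]; field_simp

lemma alp_nonneg {ν p : ℝ} (hν : 0 < ν) (hp : 1 < p) : 0 ≤ alp ν p := by
  have hx : 0 < (p-1)*ν/p := by have : 0 < p - 1 := by linarith
                                positivity
  have : 0 ≤ uiGamma (1 - ν / p) ((p - 1) * ν / p) := by
    apply setIntegral_nonneg measurableSet_Ioi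
    intro t ht
    have : 0 < t := lt_trans hx ht
    positivity
  unfold alp; positivity

lemma Gf_anti {ν p x y : ℝ} (hν : 0 < ν) (hp : 1 < p) (hx : 0 ≤ x) (hxy : x ≤ y) : Gf ν p y ≤ Gf ν p x := by
  have h2 : 0 < x^p + ν*(p-1) := by
    have : 0 < p - 1 := by linarith
    positivity
  unfold Gf
  apply div_le_div_of_nonneg_left (by linarith) h2
  gcongr

lemma radial_int2 {ν p : ℝ} (hν : 0 < ν) (hp : 1 < p) :
    IntegrableOn (fun r => r^(ν-1) * Real.exp (-r^p/p) * (Gf ν p r - alp ν p)) (Ioi 0) := by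
  have h := radial_int hν hp
  have : IntegrableOn (fun r => r^(ν-1) * Real.exp (-r^p/p) * Gf ν p r) (Ioi 0) := by
    refine (h.integrable.const_mul (1/ν)).mono' ?_ ?_
    · apply Measurable.aestronglyMeasurable
      unfold Gf; fun_prop
    · filter_upwards [ae_restrict_mem measurableSet_Ioi] with r hr
      have hr' : 0 < r := hr
      have := Gf_bd hν hp hr'.le
      rw [Real.norm_of_nonneg (mul_nonneg (by positivity) this.1), mul_comm]
      exact mul_le_mul_of_nonneg_right this.2 (by positivity)
  have h2 := this.integrable.sub (h.integrable.mul_const (alp ν p))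
  refine Integrable.congr h2 (Filter.Eventually.of_forall fun r => ?_)
  simp only [Pi.sub_apply]; ring

lemma radial_down {ν p : ℝ} (hν : 0 < ν) (hp : 1 < p) {T : Set ℝ} (hT : MeasurableSet T)
    (hd : ∀ r ∈ T, ∀ r', 0 < r' → r' ≤ r → r' ∈ T) :
    0 ≤ ∫ r in Ioi (0:ℝ), T.indicator (fun r => r^(ν-1) * Real.exp (-r^p/p) * (Gf ν p r - alp ν p)) r := by
  set f := fun r => r^(ν-1) * Real.exp (-r^p/p) * (Gf ν p r - alp ν p) with hf
  have hi := radial_int2 hν hp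
  have tot : ∫ r in Ioi (0:ℝ), f r = 0 := by
    have h1 := radial_eq hν hp
    by_contra hne
    apply hne
    have e : ∀ r, f r + alp ν p * (r^(ν-1) * Real.exp (-r^p/p)) = r^(ν-1) * Real.exp (-r^p/p) * Gf ν p r := by
      intro r; simp only [hf]; ring
    have := integral_add hi.integrable ((radial_int hν hp).integrable.const_mul (alp ν p))
    rw [← hf] at this
    have e' : (∫ r in Ioi (0:ℝ), (f r + alp ν p * (r^(ν-1) * Real.exp (-r^p/p)))) = _ :=
      congrArg (fun g : ℝ → ℝ => ∫ r in Ioi (0:ℝ), g r) (funext e)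
    rw [e', integral_const_mul, h1] at this
    linarith
  by_cases hc : ∀ r ∈ T, 0 < r → 0 ≤ Gf ν p r - alp ν p
  · apply setIntegral_nonneg measurableSet_Ioi
    intro r hr
    have hr' : 0 < r := hr
    apply indicator_apply_nonneg
    intro hrT
    have := hc r hrT hr'
    simp only [hf]; positivity
  · push Not at hc
    obtain ⟨r0, h0T, h0, hneg⟩ := hc
    have e : ∀ r, T.indicator f r = f r - (Tᶜ).indicator f r := by
      intro r
      by_cases h : r ∈ T <;> simp [h]
    have hi' : IntegrableOn ((Tᶜ).indicator f) (Ioi 0) := hi.integrable.indicator hT.compl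
    have h3 : ∫ r in Ioi (0:ℝ), (Tᶜ).indicator f r ≤ 0 := by
      apply setIntegral_nonpos measurableSet_Ioi
      intro r hr
      have hr' : 0 < r := hr
      apply indicator_apply_nonpos
      intro hrT
      have : r0 ≤ r := by
        by_contra hlt
        exact hrT (hd r0 h0T r hr' (by linarith))
      have := Gf_anti hν hp h0.le this
      simp only [hf]
      apply mul_nonpos_of_nonneg_of_nonpos (by positivity) (by linarith)
    simp_rw [e]
    rw [integral_sub hi.integrable hi'.integrable, tot]
    linarith


lemma polar_nonneg {n : ℕ} (hn : 2 ≤ n) (H : EuclideanSpace ℝ (Fin n) → ℝ)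
    (h : ∀ u : EuclideanSpace ℝ (Fin n), ‖u‖ = 1 → 0 ≤ ∫ r in Ioi (0:ℝ), r^(n-1) * H (r • u)) :
    0 ≤ ∫ x, H x := by
  have e1 : ∫ x, H x = ∫ x : ({(0)}ᶜ : Set (EuclideanSpace ℝ (Fin n))), H x.1 ∂((volume : Measure (EuclideanSpace ℝ (Fin n))).comap Subtype.val) := by
    haveI : Nontrivial (EuclideanSpace ℝ (Fin n)) := by
      apply Module.nontrivial_of_finrank_pos (R := ℝ)
      rw [finrank_euclideanSpace_fin]; omega
    rw [integral_subtype_comap (measurableSet_singleton _).compl fun x ↦ H x,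
        restrict_compl_singleton]
  have e2 := (volume : Measure (EuclideanSpace ℝ (Fin n))).measurePreserving_homeomorphUnitSphereProd.integral_comp
        (Homeomorph.measurableEmbedding _) (fun z => H (z.2.1 • z.1.1))
  have e3 : ∀ x : ({(0)}ᶜ : Set (EuclideanSpace ℝ (Fin n))),
      ((homeomorphUnitSphereProd (EuclideanSpace ℝ (Fin n)) x).2.1 • (homeomorphUnitSphereProd (EuclideanSpace ℝ (Fin n)) x).1.1) = x.1 := by
    intro x
    have := congrArg Subtype.val ((homeomorphUnitSphereProd (EuclideanSpace ℝ (Fin n))).symm_apply_apply x)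
    rwa [homeomorphUnitSphereProd_symm_apply_coe] at this
  simp_rw [e3] at e2
  rw [e1, e2]
  by_cases hi : Integrable (fun z : Metric.sphere (0 : EuclideanSpace ℝ (Fin n)) 1 × Ioi (0:ℝ) => H (z.2.1 • z.1.1))
    ((volume : Measure (EuclideanSpace ℝ (Fin n))).toSphere.prod (.volumeIoiPow (Module.finrank ℝ (EuclideanSpace ℝ (Fin n)) - 1)))
  · rw [integral_prod _ hi]
    apply integral_nonneg
    intro u
    simp only [Pi.zero_apply]
    have hu : ‖(u:EuclideanSpace ℝ (Fin n))‖ = 1 := by simpa using u.2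
    have h0 := h u hu
    rw [finrank_euclideanSpace_fin]
    simp only [Measure.volumeIoiPow, ENNReal.ofReal]
    rw [integral_withDensity_eq_integral_smul,
        integral_subtype_comap measurableSet_Ioi fun a : ℝ ↦ Real.toNNReal (a ^ (n - 1)) • H (a • (u:EuclideanSpace ℝ (Fin n))),
        setIntegral_congr_fun measurableSet_Ioi fun x hx ↦ ?_]
    · exact h0
    · simp only [NNReal.smul_def, Real.coe_toNNReal _ (pow_nonneg (le_of_lt (mem_Ioi.1 hx)) _), smul_eq_mul]
    · exact (measurable_subtype_coe.pow_const _).real_toNNReal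
  · rw [integral_undef hi]

lemma avg {n : ℕ} (hn : 2 ≤ n) {p : ℝ} (hp : 1 < p) {C : Set (EuclideanSpace ℝ (Fin n))} (mC : MeasurableSet C)
    (hs : ∀ x ∈ C, ∀ t : ℝ, 0 ≤ t → t ≤ 1 → t • x ∈ C) :
    0 ≤ ∫ x in C, Real.exp (-‖x‖^p/p) * (Gf n p ‖x‖ - alp n p) := by
  rw [← integral_indicator mC]
  apply polar_nonneg hn
  intro u hu
  have h := radial_down (ν := n) (p := p) (by positivity) hp (T := {r : ℝ | r • u ∈ C})
    (by have : Measurable fun r : ℝ => r • u := by fun_prop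
        exact this mC)
    (by
      intro r hr r' h0 hrr
      have := hs _ hr (r'/r) (div_nonneg h0.le (by linarith)) (by rw [div_le_one (by linarith)]; exact hrr)
      rw [smul_smul, div_mul_cancel₀ _ (by linarith)] at this
      exact this)
  refine h.trans_eq (setIntegral_congr_fun measurableSet_Ioi fun r hr ↦ ?_)
  have hr' : (0:ℝ) < r := hr
  by_cases hC : r • u ∈ C
  · rw [indicator_of_mem (by exact hC), indicator_of_mem hC]
    rw [norm_smul, hu, Real.norm_of_nonneg hr'.le, mul_one, mul_assoc]
    congr 1
    rw [← Real.rpow_natCast, Nat.cast_sub (by omega)]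
    simp
  · rw [indicator_of_notMem (by exact hC), indicator_of_notMem hC]
    simp


noncomputable def mm {n : ℕ} (p : ℝ) (S : Set (EuclideanSpace ℝ (Fin n))) : ℝ := ∫ x in S, Real.exp (-‖x‖^p/p)

lemma Nm_exp {n : ℕ} (hn : 2 ≤ n) (P Q : ℝ) :
    Nm n (Real.exp (-P)) (Real.exp (-Q)) = Real.exp (-((P+Q)/2 + n * lc ((Q-P)/(2*n)))) := by
  have hn0 : (0:ℝ) < n := by positivity
  unfold Nm
  rw [if_neg (by omega), ← Real.exp_mul, ← Real.exp_mul]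
  have h : (Real.exp (-P * (-1/(n:ℝ))) + Real.exp (-Q * (-1/(n:ℝ))))/2 =
      Real.exp ((P+Q)/(2*n) + lc ((Q-P)/(2*n))) := by
    rw [Real.exp_add, lc, Real.exp_log (Real.cosh_pos _), Real.cosh_eq, ← mul_div_assoc (Real.exp ((P+Q)/(2*n))), mul_add, ← Real.exp_add, ← Real.exp_add,
      add_comm (Real.exp (-P * (-1/(n:ℝ))))]
    congr 3
    · field_simp; ring
    · field_simp; ring
  rw [h, ← Real.exp_mul]
  congr 1
  field_simp

lemma exp_int {n : ℕ} {p : ℝ} (hp : 1 < p) {S : Set (EuclideanSpace ℝ (Fin n))} (hS : IsCompact S) :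
    IntegrableOn (fun x => Real.exp (-‖x‖^p/p)) S := by
  apply ContinuousOn.integrableOn_compact hS
  apply Continuous.continuousOn
  have : Continuous fun x : EuclideanSpace ℝ (Fin n) => ‖x‖^p := by
    apply Continuous.rpow_const continuous_norm
    intro x; right; linarith
  fun_prop

lemma Gf_meas {n : ℕ} {p : ℝ} : Measurable fun x : EuclideanSpace ℝ (Fin n) => Gf n p ‖x‖ := by
  unfold Gf; fun_prop

lemma expG_int {n : ℕ} (hn : 2 ≤ n) {p : ℝ} (hp : 1 < p) {S : Set (EuclideanSpace ℝ (Fin n))} (hS : IsCompact S) (c : ℝ) :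
    IntegrableOn (fun x => Real.exp (-‖x‖^p/p) * (Gf n p ‖x‖ - c)) S := by
  refine ((exp_int hp hS).integrable.mul_const (1 + |c|)).mono' ?_ ?_
  · apply Measurable.aestronglyMeasurable
    have := Gf_meas (n := n) (p := p)
    fun_prop
  · refine Filter.Eventually.of_forall fun x => ?_
    rw [norm_mul, Real.norm_of_nonneg (Real.exp_pos _).le]
    gcongr
    have := Gf_bd (ν := n) (by positivity) hp (norm_nonneg x)
    have h2 : 1/(n:ℝ) ≤ 1 := by
      rw [div_le_one (by positivity)]; exact_mod_cast (by omega : 1 ≤ n)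
    have := abs_le.1 (le_refl |c|)
    rw [Real.norm_eq_abs, abs_le]
    constructor <;> linarith

lemma mid_up {n : ℕ} (hn : 2 ≤ n) {p : ℝ} (hp : 1 < p) {η a : ℝ} (hη : 0 < η) (hη1 : η ≤ 1) (ha : a^2/8 ≤ η)
    {C : Set (EuclideanSpace ℝ (Fin n))} (hC : IsCompact C)
    (hs : ∀ x ∈ C, ∀ t : ℝ, 0 ≤ t → t ≤ 1 → t • x ∈ C) :
    ∫ x in C, Real.exp (-‖x‖^p/p) * Real.exp (-((Gf n p ‖x‖ - η)*a^2/8)) ≤ mm p C * Real.exp (-((alp n p - 2*η)*a^2/8)) := by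
  have hA := avg hn hp hC.measurableSet hs
  have i1 := exp_int hp hC
  have i2 := expG_int hn hp hC (alp n p)
  set q := a^2/8 with hq
  have hq0 : 0 ≤ q := by positivity
  have hm0 : 0 ≤ mm p C := setIntegral_nonneg hC.measurableSet fun x _ => (Real.exp_pos _).le
  have key : ∀ x : EuclideanSpace ℝ (Fin n), Real.exp (-‖x‖^p/p) * Real.exp (-((Gf n p ‖x‖ - η)*a^2/8)) ≤
      (1 - (alp n p - 2*η)*q) * Real.exp (-‖x‖^p/p) - q * (Real.exp (-‖x‖^p/p) * (Gf n p ‖x‖ - alp n p)) := by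
    intro x
    have hg := Gf_bd (ν := n) (by positivity) hp (norm_nonneg x)
    have h2 : 1/(n:ℝ) ≤ 1 := by
      rw [div_le_one (by positivity)]; exact_mod_cast (by omega : 1 ≤ n)
    set G := Gf n p ‖x‖
    have hs : |-((G - η)*a^2/8)| ≤ q := by
      rw [show -((G - η)*a^2/8) = -(G-η)*q by rw [hq]; ring, abs_mul, abs_of_nonneg hq0]
      have : |-(G-η)| ≤ 1 := by rw [abs_le]; constructor <;> linarith
      nlinarith
    have h3 := (abs_le.1 (Real.abs_exp_sub_one_sub_id_le (hs.trans (ha.trans hη1)))).2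
    have h4 : (-((G - η)*a^2/8))^2 ≤ q^2 := by
      rw [← sq_abs (-((G - η)*a^2/8))]; gcongr
    have h5 : Real.exp (-((G - η)*a^2/8)) ≤ 1 - (G-η)*q + η*q := by
      have : q^2 ≤ η*q := by nlinarith
      have e : -((G - η)*a^2/8) = -((G-η)*q) := by rw [hq]; ring
      rw [e] at h3 h4 ⊢
      linarith
    have := mul_le_mul_of_nonneg_left h5 (Real.exp_pos (-‖x‖^p/p)).le
    linarith
  have i3 : IntegrableOn (fun x : EuclideanSpace ℝ (Fin n) => (1 - (alp n p - 2*η)*q) * Real.exp (-‖x‖^p/p) - q * (Real.exp (-‖x‖^p/p) * (Gf n p ‖x‖ - alp n p))) C :=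
    (i1.integrable.const_mul _).sub (i2.integrable.const_mul _)
  calc _ ≤ ∫ x in C, ((1 - (alp n p - 2*η)*q) * Real.exp (-‖x‖^p/p) - q * (Real.exp (-‖x‖^p/p) * (Gf n p ‖x‖ - alp n p))) := by
        apply integral_mono_of_nonneg (Filter.Eventually.of_forall fun x => by positivity) i3 (Filter.Eventually.of_forall key)
    _ = (1 - (alp n p - 2*η)*q) * mm p C - q * ∫ x in C, (Real.exp (-‖x‖^p/p) * (Gf n p ‖x‖ - alp n p)) := by
        rw [integral_sub (i1.integrable.const_mul _) (i2.integrable.const_mul _), integral_const_mul, integral_const_mul, mm]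
    _ ≤ (1 - (alp n p - 2*η)*q) * mm p C := by nlinarith
    _ ≤ mm p C * Real.exp (-((alp n p - 2*η)*a^2/8)) := by
        have : 1 - (alp n p - 2*η)*q ≤ Real.exp (-((alp n p - 2*η)*a^2/8)) := by
          have := Real.add_one_le_exp (-((alp n p - 2*η)*a^2/8))
          rw [hq]; linarith
        nlinarith

lemma mid {n : ℕ} (hn : 2 ≤ n) {p : ℝ} (hp : 1 < p) {η : ℝ} (hη : 0 < η) (hη1 : η ≤ 1) (R : ℝ) :
    ∃ a0 > 0, ∀ A B C : Set (EuclideanSpace ℝ (Fin n)), IsCompact A → IsCompact B → IsCompact C →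
      A ⊆ Metric.closedBall 0 R → B ⊆ Metric.closedBall 0 R → C ⊆ Metric.closedBall 0 R →
      (∀ x ∈ C, ∀ t : ℝ, 0 ≤ t → t ≤ 1 → t • x ∈ C) →
      (∀ x ∈ A, ∀ y ∈ B, (1/2:ℝ) • (x+y) ∈ C) → 0 < mm p A → 0 < mm p B →
      |Real.log (mm p B) - Real.log (mm p A)| ≤ a0 →
      Real.exp ((Real.log (mm p A) + Real.log (mm p B))/2) ≤
        mm p C * Real.exp (-((alp n p - 2*η)*(Real.log (mm p B) - Real.log (mm p A))^2/8)) := by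
  obtain ⟨a0, ha0, hpt⟩ := pointwise (ν := n) (p := p) (R := R) (η := η) (by exact_mod_cast (by omega : 1 ≤ n)) hp hη
  refine ⟨min a0 η, by positivity, ?_⟩
  intro A B C cA cB cC bA bB bC hs hABC hk hl ha
  set k := Real.log (mm p A) with hkd
  set l := Real.log (mm p B) with hld
  set a := l - k with had
  have ha1 : |a| ≤ a0 := ha.trans (min_le_left _ _)
  have ha2 : a^2/8 ≤ η := by
    have : |a| ≤ η := ha.trans (min_le_right _ _)
    rw [← sq_abs]
    nlinarith [abs_nonneg a]
  have hup := mid_up hn hp hη hη1 ha2 cC hs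
  let f := A.indicator (fun x : EuclideanSpace ℝ (Fin n) => Real.exp (-(‖x‖^p/p + k)))
  let g := B.indicator (fun x : EuclideanSpace ℝ (Fin n) => Real.exp (-(‖x‖^p/p + l)))
  let h := C.indicator (fun x : EuclideanSpace ℝ (Fin n) => Real.exp (-(‖x‖^p/p + (Gf n p ‖x‖ - η)*a^2/8 + (k+l)/2)))
  have hGm := Gf_meas (n := n) (p := p)
  have mf : Measurable f := Measurable.indicator (by fun_prop) cA.measurableSet
  have mg : Measurable g := Measurable.indicator (by fun_prop) cB.measurableSet
  have mh : Measurable h := Measurable.indicator (by fun_prop) cC.measurableSet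
  have gen : ∀ (S : Set (EuclideanSpace ℝ (Fin n))) (F : EuclideanSpace ℝ (Fin n) → ℝ) (c M : ℝ),
      S ⊆ Metric.closedBall 0 R → (∀ x, -c ≤ F x) → Real.exp c ≤ M → ∀ x, 0 ≤ S.indicator (fun x => Real.exp (-F x)) x ∧
        S.indicator (fun x => Real.exp (-F x)) x ≤ M ∧ (S.indicator (fun x => Real.exp (-F x)) x ≠ 0 → ‖x‖ ≤ R) := by
    intro S F c M hSR hF hM x
    by_cases hx : x ∈ S
    · rw [indicator_of_mem hx]
      refine ⟨(Real.exp_pos _).le, le_trans (Real.exp_le_exp.2 ?_) hM, fun _ => by simpa using hSR hx⟩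
      linarith [hF x]
    · rw [indicator_of_notMem hx]
      exact ⟨le_refl _, (Real.exp_pos c).le.trans hM, fun h => absurd rfl h⟩
  set M := max (Real.exp (-k)) (max (Real.exp (-l)) (Real.exp (η*a^2/8 - (k+l)/2)))
  have hV : ∀ x : EuclideanSpace ℝ (Fin n), 0 ≤ ‖x‖^p/p := fun x => by positivity
  have bf := gen A (fun x => ‖x‖^p/p + k) (-k) M bA (fun x => by linarith [hV x]) (le_max_left _ _)
  have bg := gen B (fun x => ‖x‖^p/p + l) (-l) M bB (fun x => by linarith [hV x]) ((le_max_left _ _).trans (le_max_right _ _))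
  have bh := gen C (fun x => ‖x‖^p/p + (Gf n p ‖x‖ - η)*a^2/8 + (k+l)/2) (η*a^2/8 - (k+l)/2) M bC (fun x => by
    have := (Gf_bd (ν := n) (by positivity) hp (norm_nonneg x)).1
    have : 0 ≤ Gf n p ‖x‖ * (a^2/8) := by positivity
    linarith [hV x]) ((le_max_right _ _).trans (le_max_right _ _))
  have If : ∫ x, f x = 1 := by
    simp only [f]
    rw [integral_indicator cA.measurableSet]
    have : ∀ x : EuclideanSpace ℝ (Fin n), Real.exp (-(‖x‖^p/p + k)) = Real.exp (-‖x‖^p/p) * Real.exp (-k) := by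
      intro x; rw [← Real.exp_add]; congr 1; ring
    simp_rw [this]
    rw [integral_mul_const, Real.exp_neg, hkd, Real.exp_log hk]
    exact mul_inv_cancel₀ hk.ne'
  have Ig : ∫ x, g x = 1 := by
    simp only [g]
    rw [integral_indicator cB.measurableSet]
    have : ∀ x : EuclideanSpace ℝ (Fin n), Real.exp (-(‖x‖^p/p + l)) = Real.exp (-‖x‖^p/p) * Real.exp (-l) := by
      intro x; rw [← Real.exp_add]; congr 1; ring
    simp_rw [this]
    rw [integral_mul_const, Real.exp_neg, hld, Real.exp_log hl]
    exact mul_inv_cancel₀ hl.ne'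
  have Ih : ∫ x, h x = (∫ x in C, Real.exp (-‖x‖^p/p) * Real.exp (-((Gf n p ‖x‖ - η)*a^2/8))) * Real.exp (-((k+l)/2)) := by
    simp only [h]
    rw [integral_indicator cC.measurableSet, ← integral_mul_const]
    congr 1; ext x
    rw [← Real.exp_add, ← Real.exp_add]; congr 1; ring
  have fin := bbl_euc n mf mg mh bf bg bh ?_ (by rw [If]; norm_num) (by rw [Ig]; norm_num)
  · rw [If, Ig, min_self, Ih] at fin
    have e : Real.exp ((k+l)/2) * Real.exp (-((k+l)/2)) = 1 := by rw [← Real.exp_add]; simp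
    rw [← e] at fin
    exact (le_of_mul_le_mul_right fin (Real.exp_pos _)).trans hup
  · intro x y hx hy
    have hxA : x ∈ A := by by_contra hh; simp [f, hh] at hx
    have hyB : y ∈ B := by by_contra hh; simp [g, hh] at hy
    have hz := hABC x hxA y hyB
    simp only [f, g, h]
    rw [indicator_of_mem hxA, indicator_of_mem hyB, indicator_of_mem hz, Nm_exp hn]
    apply Real.exp_le_exp.2
    have hxR : ‖x‖ ∈ Icc 0 R := ⟨norm_nonneg _, by simpa using bA hxA⟩
    have hyR : ‖y‖ ∈ Icc 0 R := ⟨norm_nonneg _, by simpa using bB hyB⟩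
    have := hpt a ha1 ‖x‖ hxR ‖y‖ hyR ‖(1/2:ℝ) • (x+y)‖ (norm_nonneg _) (by
      rw [norm_smul]
      have := norm_add_le x y
      norm_num
      linarith)
    have e : ‖y‖^p/p + l - (‖x‖^p/p + k) = ‖y‖^p/p - ‖x‖^p/p + a := by rw [had]; ring
    rw [e]
    linarith


lemma mid_pow {mA mB mC β : ℝ} (hβ : 0 < β) (hA : 0 < mA) (hB : 0 < mB)
    (h : Real.exp ((Real.log mA + Real.log mB)/2) ≤ mC * Real.exp (-(β*(Real.log mB - Real.log mA)^2/8))) :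
    mA^β + mB^β ≤ 2 * mC^β := by
  set k := Real.log mA with hk
  set l := Real.log mB with hl
  have hC : 0 < mC := by
    by_contra hh
    have h1 := Real.exp_pos ((k+l)/2)
    have h2 := Real.exp_pos (-(β*(l-k)^2/8))
    nlinarith
  have h3 : (k+l)/2 + β*(l-k)^2/8 ≤ Real.log mC := by
    have := Real.log_le_log (Real.exp_pos _) h
    rw [Real.log_exp, Real.log_mul hC.ne' (Real.exp_pos _).ne', Real.log_exp] at this
    linarith
  rw [Real.rpow_def_of_pos hA, Real.rpow_def_of_pos hB, Real.rpow_def_of_pos hC, ← hk, ← hl]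
  have h4 : Real.exp (k*β) + Real.exp (l*β) = 2 * (Real.exp (β*(k+l)/2) * Real.cosh (β*(l-k)/2)) := by
    rw [Real.cosh_eq]
    have e1 : Real.exp (k*β) = Real.exp (β*(k+l)/2) * Real.exp (-(β*(l-k)/2)) := by
      rw [← Real.exp_add]; congr 1; ring
    have e2 : Real.exp (l*β) = Real.exp (β*(k+l)/2) * Real.exp ((β*(l-k)/2)) := by
      rw [← Real.exp_add]; congr 1; ring
    rw [e1, e2]; ring
  rw [h4]
  have h5 := Real.cosh_le_exp_half_sq (β*(l-k)/2)
  have h6 : Real.exp (β*(k+l)/2) * Real.exp ((β*(l-k)/2)^2/2) ≤ Real.exp (Real.log mC * β) := by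
    rw [← Real.exp_add]
    apply Real.exp_le_exp.2
    nlinarith
  have := mul_le_mul_of_nonneg_left h5 (Real.exp_pos (β*(k+l)/2)).le
  linarith

lemma conc {F : ℝ → ℝ} {u v : ℝ} (huv : u < v) (hc : ContinuousOn F (Icc u v))
    (hl : ∀ t ∈ Ioo u v, ∃ d > 0, ∀ δ, 0 < δ → δ < d → F (t-δ) + F (t+δ) ≤ 2 * F t) {s : ℝ} (hs : s ∈ Icc (0:ℝ) 1) :
    s * F v + (1-s) * F u ≤ F (s*v + (1-s)*u) := by
  have hvu : 0 < v - u := by linarith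
  set H : ℝ → ℝ := fun t => F u + (t-u)/(v-u)*(F v - F u) - F t with hH
  have Hc : ContinuousOn H (Icc u v) := by
    apply ContinuousOn.sub _ hc
    fun_prop
  have hne : (Icc u v).Nonempty := ⟨u, left_mem_Icc.2 huv.le⟩
  obtain ⟨t1, ht1, hmax⟩ := isCompact_Icc.exists_isMaxOn hne Hc
  have hmax' : ∀ t ∈ Icc u v, H t ≤ H t1 := fun t ht => hmax ht
  have Hu : H u = 0 := by simp [hH]
  have Hv : H v = 0 := by simp only [hH]; field_simp; ring
  have hM : H t1 ≤ 0 := by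
    by_contra hM
    push Not at hM
    have hZ : IsCompact (Icc u v ∩ H ⁻¹' {H t1}) := by
      apply IsCompact.of_isClosed_subset isCompact_Icc _ inter_subset_left
      exact Hc.preimage_isClosed_of_isClosed isClosed_Icc isClosed_singleton
    obtain ⟨t0, ⟨ht0, hH0⟩, hleast⟩ := hZ.exists_isLeast ⟨t1, ht1, rfl⟩
    have hH0' : H t0 = H t1 := hH0
    have n1 : u < t0 := by
      rcases ht0.1.lt_or_eq with h | h
      · exact h
      · rw [← h, Hu] at hH0'; linarith
    have n2 : t0 < v := by
      rcases ht0.2.lt_or_eq with h | h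
      · exact h
      · rw [h, Hv] at hH0'; linarith
    obtain ⟨d, hd, hdd⟩ := hl t0 ⟨n1, n2⟩
    obtain ⟨δ, δ0, δ1⟩ := exists_between (show 0 < min d (min (t0-u) (v-t0)) from by
      apply lt_min hd (lt_min _ _) <;> linarith)
    have b1 : δ < d := δ1.trans_le (min_le_left _ _)
    have b2 : δ < t0 - u := δ1.trans_le ((min_le_right _ _).trans (min_le_left _ _))
    have b3 : δ < v - t0 := δ1.trans_le ((min_le_right _ _).trans (min_le_right _ _))
    have c1 := hdd δ δ0 b1
    have m1 : t0 - δ ∈ Icc u v := ⟨by linarith, by linarith⟩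
    have c2 := hmax' (t0-δ) m1
    have c3 := hmax' (t0+δ) ⟨by linarith, by linarith⟩
    have c4 : H (t0-δ) ≠ H t1 := by
      intro h
      have : t0 ≤ t0 - δ := hleast ⟨m1, h⟩
      linarith
    have c5 : H (t0-δ) < H t1 := lt_of_le_of_ne c2 c4
    have c6 : H (t0-δ) + H (t0+δ) = 2 * H t0 + (2 * F t0 - F (t0-δ) - F (t0+δ)) := by
      simp only [hH]; ring
    linarith
  have hmem : s*v + (1-s)*u ∈ Icc u v := ⟨by nlinarith [hs.1, hs.2], by nlinarith [hs.1, hs.2]⟩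
  have := (hmax' _ hmem).trans hM
  simp only [hH] at this
  have e : (s*v + (1-s)*u - u)/(v-u) = s := by field_simp; ring
  rw [e] at this
  linarith

section fam
variable {n : ℕ} {p : ℝ}

lemma mm_pos (hp : 1 < p) {S : Set (EuclideanSpace ℝ (Fin n))} (hS : IsCompact S) (hi : (interior S).Nonempty) : 0 < mm p S := by
  unfold mm
  rw [setIntegral_pos_iff_support_of_nonneg_ae (Filter.Eventually.of_forall fun x => (Real.exp_pos _).le) (exp_int hp hS)]
  have : Function.support (fun x : EuclideanSpace ℝ (Fin n) => Real.exp (-‖x‖^p/p)) = univ := by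
    ext x; simp [(Real.exp_pos _).ne']
  rw [this, univ_inter]
  exact Measure.measure_pos_of_nonempty_interior _ hi

lemma mm_mono (hp : 1 < p) {S T : Set (EuclideanSpace ℝ (Fin n))} (hT : IsCompact T) (h : S ⊆ T) : mm p S ≤ mm p T := by
  unfold mm
  exact setIntegral_mono_set (exp_int hp hT) (Filter.Eventually.of_forall fun x => (Real.exp_pos _).le) h.eventuallyLE

lemma mm_smul (hp : 1 < p) {S : Set (EuclideanSpace ℝ (Fin n))} (hS : IsCompact S) {s : ℝ} (hs : 0 < s) (hs1 : s ≤ 1) :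
    s^n * mm p S ≤ mm p (s • S) := by
  have h := Measure.setIntegral_comp_smul_of_pos volume (fun x : EuclideanSpace ℝ (Fin n) => Real.exp (-‖x‖^p/p)) S hs
  rw [finrank_euclideanSpace_fin, smul_eq_mul] at h
  have h2 : mm p (s • S) = s^n * ∫ x in S, Real.exp (-‖s • x‖^p/p) := by
    rw [h, mm]; field_simp
  rw [h2]
  gcongr
  unfold mm
  apply integral_mono_of_nonneg (Filter.Eventually.of_forall fun x => (Real.exp_pos _).le)
  · have hc : Continuous fun x : EuclideanSpace ℝ (Fin n) => ‖s • x‖^p := by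
      apply Continuous.rpow_const (by fun_prop)
      intro x; right; linarith
    exact ContinuousOn.integrableOn_compact hS (Continuous.continuousOn (by fun_prop))
  · refine Filter.Eventually.of_forall fun x => ?_
    apply Real.exp_le_exp.2
    have : ‖s • x‖ ≤ ‖x‖ := by
      rw [norm_smul, Real.norm_of_nonneg hs.le]
      nlinarith [norm_nonneg x]
    have : ‖s • x‖^p ≤ ‖x‖^p := by gcongr
    gcongr

variable {K L : Set (EuclideanSpace ℝ (Fin n))}

lemma mem_fam {t : ℝ} {z : EuclideanSpace ℝ (Fin n)} : z ∈ t • K + (1-t) • L ↔ ∃ x ∈ K, ∃ y ∈ L, t • x + (1-t) • y = z := by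
  simp only [Set.mem_add, Set.mem_smul_set]
  constructor
  · rintro ⟨_, ⟨x, hx, rfl⟩, _, ⟨y, hy, rfl⟩, rfl⟩
    exact ⟨x, hx, y, hy, rfl⟩
  · rintro ⟨x, hx, y, hy, rfl⟩
    exact ⟨_, ⟨x, hx, rfl⟩, _, ⟨y, hy, rfl⟩, rfl⟩

lemma star0 (hv : Convex ℝ K) (h0 : (0:EuclideanSpace ℝ (Fin n)) ∈ K) {x} (hx : x ∈ K) {t : ℝ} (t0 : 0 ≤ t) (t1 : t ≤ 1) : t • x ∈ K :=
  hv.smul_mem_of_zero_mem h0 hx ⟨t0, t1⟩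

lemma fam_compact (hK : IsCompact K) (hL : IsCompact L) (t : ℝ) : IsCompact (t • K + (1-t) • L) :=
  (hK.smul t).add (hL.smul (1-t))

lemma fam_incl (hKv : Convex ℝ K) (hLv : Convex ℝ L) (hK0 : (0:EuclideanSpace ℝ (Fin n)) ∈ K) (hL0 : (0:EuclideanSpace ℝ (Fin n)) ∈ L)
    {t0 t c : ℝ} (h0 : 0 ≤ t0) (h1 : t0 ≤ 1) (ht : t ∈ Ioo (0:ℝ) 1) (hc : 0 ≤ c) (hc1 : c * t0 ≤ t) (hc2 : c * (1-t0) ≤ 1-t) :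
    c • (t0 • K + (1-t0) • L) ⊆ t • K + (1-t) • L := by
  rintro _ ⟨z, hz, rfl⟩
  obtain ⟨x, hx, y, hy, rfl⟩ := mem_fam.1 hz
  have ht0 := ht.1
  have ht1 : 0 < 1 - t := by linarith [ht.2]
  have h1' : 0 ≤ 1 - t0 := by linarith
  refine mem_fam.2 ⟨(c*t0/t) • x, star0 hKv hK0 hx (by positivity) (by rw [div_le_one ht0]; exact hc1),
    (c*(1-t0)/(1-t)) • y, star0 hLv hL0 hy (by positivity) (by rw [div_le_one ht1]; exact hc2), ?_⟩
  simp only [smul_add, smul_smul]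
  rw [mul_div_cancel₀ _ ht0.ne', mul_div_cancel₀ _ ht1.ne']

lemma fam_le (hp : 1 < p) (hK : IsCompact K) (hL : IsCompact L) (hKv : Convex ℝ K) (hLv : Convex ℝ L) (hK0 : (0:EuclideanSpace ℝ (Fin n)) ∈ K) (hL0 : (0:EuclideanSpace ℝ (Fin n)) ∈ L)
    {t0 t c : ℝ} (h0 : 0 ≤ t0) (h1 : t0 ≤ 1) (ht : t ∈ Ioo (0:ℝ) 1) (hc : 0 < c) (hc1 : c * t0 ≤ t) (hc2 : c * (1-t0) ≤ 1-t) :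
    c^n * mm p (t0 • K + (1-t0) • L) ≤ mm p (t • K + (1-t) • L) :=
  (mm_smul hp (fam_compact hK hL t0) hc (by linarith)).trans (mm_mono hp (fam_compact hK hL t) (fam_incl hKv hLv hK0 hL0 h0 h1 ht hc.le hc1 hc2))

lemma fam_pos (hp : 1 < p) (hK : IsCompact K) (hL : IsCompact L) (hKv : Convex ℝ K) (hLv : Convex ℝ L) (hK0 : (0:EuclideanSpace ℝ (Fin n)) ∈ K) (hL0 : (0:EuclideanSpace ℝ (Fin n)) ∈ L)
    (hKi : (interior K).Nonempty) {t : ℝ} (ht : t ∈ Ioo (0:ℝ) 1) : 0 < mm p (t • K + (1-t) • L) := by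
  have h := fam_le hp hK hL hKv hLv hK0 hL0 (t0 := 1) (t := t) (c := t) (by norm_num) le_rfl ht ht.1 (by linarith) (by linarith [ht.2])
  have e : (1:ℝ) • K + (1-1:ℝ) • L = K := by rw [sub_self, one_smul, zero_smul_set ⟨0, hL0⟩, add_zero]
  rw [e] at h
  have := mm_pos hp hK hKi
  have h2 := ht.1
  exact lt_of_lt_of_le (by positivity) h

lemma fam_cont (hp : 1 < p) (hK : IsCompact K) (hL : IsCompact L) (hKv : Convex ℝ K) (hLv : Convex ℝ L) (hK0 : (0:EuclideanSpace ℝ (Fin n)) ∈ K) (hL0 : (0:EuclideanSpace ℝ (Fin n)) ∈ L)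
    {t0 : ℝ} (ht0 : t0 ∈ Ioo (0:ℝ) 1) : ContinuousAt (fun t : ℝ => mm p (t • K + (1-t) • L)) t0 := by
  have a0 := ht0.1
  have a1 : 0 < 1 - t0 := by linarith [ht0.2]
  set φ := fun t : ℝ => mm p (t • K + (1-t) • L) with hφ
  have gen : ∀ s ∈ Ioo (0:ℝ) 1, ∀ t ∈ Ioo (0:ℝ) 1, (min (t/s) ((1-t)/(1-s)))^n * φ s ≤ φ t := by
    intro s hs t ht
    have s0 := hs.1
    have s1 : 0 < 1 - s := by linarith [hs.2]
    have b0 := ht.1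
    have b1 : 0 < 1 - t := by linarith [ht.2]
    refine fam_le hp hK hL hKv hLv hK0 hL0 hs.1.le hs.2.le ht (by positivity) ?_ ?_
    · have := mul_le_mul_of_nonneg_right (min_le_left (t/s) ((1-t)/(1-s))) s0.le
      rwa [div_mul_cancel₀ _ s0.ne'] at this
    · have := mul_le_mul_of_nonneg_right (min_le_right (t/s) ((1-t)/(1-s))) s1.le
      rwa [div_mul_cancel₀ _ s1.ne'] at this
  have hev : ∀ᶠ t in nhds t0, t ∈ Ioo (0:ℝ) 1 := Ioo_mem_nhds ht0.1 ht0.2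
  have l1 : Filter.Tendsto (fun t => (min (t/t0) ((1-t)/(1-t0)))^n * φ t0) (nhds t0) (nhds (φ t0)) := by
    have : ContinuousAt (fun t => (min (t/t0) ((1-t)/(1-t0)))^n * φ t0) t0 := by fun_prop
    have h := this.tendsto
    simpa [div_self a0.ne', div_self a1.ne'] using h
  have l2 : Filter.Tendsto (fun t => φ t0 / (min (t0/t) ((1-t0)/(1-t)))^n) (nhds t0) (nhds (φ t0)) := by
    have : ContinuousAt (fun t => φ t0 / (min (t0/t) ((1-t0)/(1-t)))^n) t0 := by
      apply ContinuousAt.div continuousAt_const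
      · apply ContinuousAt.pow
        refine Filter.Tendsto.min ?_ ?_
        · exact ContinuousAt.div continuousAt_const continuousAt_id a0.ne'
        · exact ContinuousAt.div continuousAt_const (by fun_prop) a1.ne'
      · simp [div_self a0.ne', div_self a1.ne']
    have h := this.tendsto
    simpa [div_self a0.ne', div_self a1.ne'] using h
  refine tendsto_of_tendsto_of_tendsto_of_le_of_le' l1 l2 ?_ ?_
  · filter_upwards [hev] with t ht
    exact gen t0 ht0 t ht
  · filter_upwards [hev] with t ht
    have b0 := ht.1
    have b1 : 0 < 1 - t := by linarith [ht.2]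
    rw [le_div_iff₀ (by positivity), mul_comm]
    exact gen t ht t0 ht0

lemma fam_mid (hKv : Convex ℝ K) (hLv : Convex ℝ L) {t δ : ℝ} (h1 : 0 < t - δ) (h2 : t + δ < 1) (hδ : 0 < δ) :
    ∀ x ∈ (t-δ) • K + (1-(t-δ)) • L, ∀ y ∈ (t+δ) • K + (1-(t+δ)) • L, (1/2:ℝ) • (x+y) ∈ t • K + (1-t) • L := by
  intro x hx y hy
  obtain ⟨x1, hx1, x2, hx2, rfl⟩ := mem_fam.1 hx
  obtain ⟨y1, hy1, y2, hy2, rfl⟩ := mem_fam.1 hy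
  have t0 : 0 < t := by linarith
  have t1 : 0 < 1 - t := by linarith
  refine mem_fam.2 ⟨((t-δ)/(2*t)) • x1 + ((t+δ)/(2*t)) • y1, hKv hx1 hy1 (by positivity) (by positivity) (by field_simp; ring),
    ((1-(t-δ))/(2*(1-t))) • x2 + ((1-(t+δ))/(2*(1-t))) • y2, hLv hx2 hy2 (div_nonneg (by linarith) (by linarith)) (div_nonneg (by linarith) (by linarith)) (by field_simp; ring), ?_⟩
  have e1 : t * ((t-δ)/(2*t)) = 1/2*(t-δ) := by field_simp
  have e2 : t * ((t+δ)/(2*t)) = 1/2*(t+δ) := by field_simp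
  have e3 : (1-t) * ((1-(t-δ))/(2*(1-t))) = 1/2*(1-(t-δ)) := by field_simp
  have e4 : (1-t) * ((1-(t+δ))/(2*(1-t))) = 1/2*(1-(t+δ)) := by field_simp
  simp only [smul_add, smul_smul, e1, e2, e3, e4]
  abel

end fam


lemma main_beta {n : ℕ} (hn : 2 ≤ n) {p : ℝ} (hp : 1 < p) {K L : Set (EuclideanSpace ℝ (Fin n))}
    (hK : IsCompact K) (hL : IsCompact L) (hKv : Convex ℝ K) (hLv : Convex ℝ L) (hK0 : (0:EuclideanSpace ℝ (Fin n)) ∈ K) (hL0 : (0:EuclideanSpace ℝ (Fin n)) ∈ L)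
    (hKi : (interior K).Nonempty) (hLi : (interior L).Nonempty) {η : ℝ} (hη : 0 < η) (hη1 : η ≤ 1) (hβ : 0 < alp n p - 2*η)
    {lam : ℝ} (hlam : lam ∈ Ioo (0:ℝ) 1) :
    lam * mm p K ^ (alp n p - 2*η) + (1-lam) * mm p L ^ (alp n p - 2*η) ≤ mm p (lam • K + (1-lam) • L) ^ (alp n p - 2*η) := by
  set β := alp n p - 2*η with hβd
  set φ := fun t : ℝ => mm p (t • K + (1-t) • L) with hφ
  have φc : ∀ t ∈ Ioo (0:ℝ) 1, ContinuousAt φ t := fun t ht => fam_cont hp hK hL hKv hLv hK0 hL0 ht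
  have φp : ∀ t ∈ Ioo (0:ℝ) 1, 0 < φ t := fun t ht => fam_pos hp hK hL hKv hLv hK0 hL0 hKi ht
  have Fc : ∀ t ∈ Ioo (0:ℝ) 1, ContinuousAt (fun t => φ t ^ β) t := fun t ht =>
    (φc t ht).rpow_const (Or.inl (φp t ht).ne')
  obtain ⟨R, hR⟩ := (hK.union hL).isBounded.subset_closedBall (0:EuclideanSpace ℝ (Fin n))
  have hball : ∀ t ∈ Ioo (0:ℝ) 1, t • K + (1-t) • L ⊆ Metric.closedBall 0 R := by
    rintro t ht z hz
    obtain ⟨x, hx, y, hy, rfl⟩ := mem_fam.1 hz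
    exact (convex_closedBall (0:EuclideanSpace ℝ (Fin n)) R) (hR (Or.inl hx)) (hR (Or.inr hy)) ht.1.le (by linarith [ht.2]) (by ring)
  obtain ⟨a0, ha0, hmid⟩ := mid hn hp hη hη1 R
  have local_mid : ∀ t ∈ Ioo (0:ℝ) 1, ∃ d > 0, ∀ δ, 0 < δ → δ < d → φ (t-δ) ^ β + φ (t+δ) ^ β ≤ 2 * φ t ^ β := by
    intro t ht
    have c1 : ContinuousAt (fun δ : ℝ => Real.log (φ (t+δ)) - Real.log (φ (t-δ))) 0 := by
      have p1 : ContinuousAt (fun δ : ℝ => φ (t+δ)) 0 := by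
        apply ContinuousAt.comp (g := φ) (f := fun δ : ℝ => t + δ)
        · simpa using φc t ht
        · fun_prop
      have p2 : ContinuousAt (fun δ : ℝ => φ (t-δ)) 0 := by
        apply ContinuousAt.comp (g := φ) (f := fun δ : ℝ => t - δ)
        · simpa using φc t ht
        · fun_prop
      exact (p1.log (by simpa using (φp t ht).ne')).sub (p2.log (by simpa using (φp t ht).ne'))
    obtain ⟨d, hd, hdd⟩ := Metric.continuousAt_iff.1 c1 a0 ha0
    refine ⟨min d (min t (1-t)), lt_min hd (lt_min ht.1 (by linarith [ht.2])), fun δ δ0 δ1 => ?_⟩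
    have b1 : δ < d := δ1.trans_le (min_le_left _ _)
    have b2 : δ < t := δ1.trans_le ((min_le_right _ _).trans (min_le_left _ _))
    have b3 : δ < 1 - t := δ1.trans_le ((min_le_right _ _).trans (min_le_right _ _))
    have m1 : t - δ ∈ Ioo (0:ℝ) 1 := ⟨by linarith, by linarith [ht.2]⟩
    have m2 : t + δ ∈ Ioo (0:ℝ) 1 := ⟨by linarith [ht.1], by linarith⟩
    have hx := hdd (x := δ) (by rw [Real.dist_eq, sub_zero, abs_of_pos δ0]; exact b1)
    simp only [add_zero, sub_zero, sub_self, dist_zero_right, Real.norm_eq_abs] at hx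
    have cv : Convex ℝ (t • K + (1-t) • L) := (hKv.smul t).add (hLv.smul (1-t))
    have z0 : (0:EuclideanSpace ℝ (Fin n)) ∈ t • K + (1-t) • L := mem_fam.2 ⟨0, hK0, 0, hL0, by simp⟩
    exact mid_pow hβ (φp _ m1) (φp _ m2) (hmid _ _ _ (fam_compact hK hL (t-δ)) (fam_compact hK hL (t+δ)) (fam_compact hK hL t)
      (hball _ m1) (hball _ m2) (hball _ ht) (fun x hx s s0 s1 => star0 cv z0 hx s0 s1)
      (fam_mid hKv hLv m1.1 m2.2 δ0) (φp _ m1) (φp _ m2) hx.le)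
  have eK : (1:ℝ) • K + (1-1:ℝ) • L = K := by rw [sub_self, one_smul, zero_smul_set ⟨0, hL0⟩, add_zero]
  have eL : (0:ℝ) • K + (1-0:ℝ) • L = L := by rw [sub_zero, one_smul, zero_smul_set ⟨0, hK0⟩, zero_add]
  have mK := mm_pos hp hK hKi
  have mL := mm_pos hp hL hLi
  have step : ∀ ε : ℝ, 0 < ε → ε < 1/2 →
      lam * ((1-ε)^n * mm p K)^β + (1-lam) * ((1-ε)^n * mm p L)^β ≤ φ (lam*(1-ε) + (1-lam)*ε) ^ β := by
    intro ε e0 e1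
    have q1 : 0 < 1 - ε := by linarith
    have h := conc (F := fun t => φ t ^ β) (u := ε) (v := 1-ε) (by linarith)
      (fun t ht => (Fc t ⟨by linarith [ht.1], by linarith [ht.2]⟩).continuousWithinAt)
      (fun t ht => local_mid t ⟨by linarith [ht.1], by linarith [ht.2]⟩) (s := lam) ⟨hlam.1.le, hlam.2.le⟩
    have f1 := fam_le hp hK hL hKv hLv hK0 hL0 (t0 := 1) (t := 1-ε) (c := 1-ε) (by norm_num) le_rfl ⟨by linarith, by linarith⟩ (by linarith) (by linarith) (by linarith)
    have f2 := fam_le hp hK hL hKv hLv hK0 hL0 (t0 := 0) (t := ε) (c := 1-ε) le_rfl (by norm_num) ⟨by linarith, by linarith⟩ (by linarith) (by linarith) (by linarith)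
    rw [eK] at f1
    rw [eL] at f2
    refine le_trans ?_ h
    have l0 := hlam.1
    have l1 : 0 < 1 - lam := by linarith [hlam.2]
    have g1 : ((1-ε)^n * mm p K)^β ≤ φ (1-ε) ^ β := Real.rpow_le_rpow (by positivity) f1 hβ.le
    have g2 : ((1-ε)^n * mm p L)^β ≤ φ ε ^ β := Real.rpow_le_rpow (by positivity) f2 hβ.le
    gcongr
  have T1 : Filter.Tendsto (fun ε : ℝ => lam * ((1-ε)^n * mm p K)^β + (1-lam) * ((1-ε)^n * mm p L)^β) (nhdsWithin 0 (Ioi 0))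
      (nhds (lam * mm p K ^ β + (1-lam) * mm p L ^ β)) := by
    have : ContinuousAt (fun ε : ℝ => lam * ((1-ε)^n * mm p K)^β + (1-lam) * ((1-ε)^n * mm p L)^β) 0 := by
      apply ContinuousAt.add
      · exact ContinuousAt.mul continuousAt_const (ContinuousAt.rpow_const (by fun_prop) (Or.inr hβ.le))
      · exact ContinuousAt.mul continuousAt_const (ContinuousAt.rpow_const (by fun_prop) (Or.inr hβ.le))
    have h := this.tendsto
    simp only [sub_zero, one_pow, one_mul] at h
    exact h.mono_left nhdsWithin_le_nhds
  have T2 : Filter.Tendsto (fun ε : ℝ => φ (lam*(1-ε) + (1-lam)*ε) ^ β) (nhdsWithin 0 (Ioi 0)) (nhds (φ lam ^ β)) := by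
    have : ContinuousAt (fun ε : ℝ => φ (lam*(1-ε) + (1-lam)*ε) ^ β) 0 := by
      apply ContinuousAt.comp (g := fun t => φ t ^ β) (f := fun ε : ℝ => lam*(1-ε) + (1-lam)*ε)
      · simpa using Fc lam hlam
      · fun_prop
    have h := this.tendsto
    simp only [sub_zero, mul_one, mul_zero, add_zero] at h
    exact h.mono_left nhdsWithin_le_nhds
  refine le_of_tendsto_of_tendsto T1 T2 ?_
  filter_upwards [Ioo_mem_nhdsGT (show (0:ℝ) < 1/2 by norm_num)] with ε hε
  exact step ε hε.1 hε.2

lemma main_alp {n : ℕ} (hn : 2 ≤ n) {p : ℝ} (hp : 1 < p) {K L : Set (EuclideanSpace ℝ (Fin n))}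
    (hK : IsCompact K) (hL : IsCompact L) (hKv : Convex ℝ K) (hLv : Convex ℝ L) (hK0 : (0:EuclideanSpace ℝ (Fin n)) ∈ K) (hL0 : (0:EuclideanSpace ℝ (Fin n)) ∈ L)
    (hKi : (interior K).Nonempty) (hLi : (interior L).Nonempty)
    {lam : ℝ} (hlam : lam ∈ Icc (0:ℝ) 1) :
    lam * mm p K ^ alp n p + (1-lam) * mm p L ^ alp n p ≤ mm p (lam • K + (1-lam) • L) ^ alp n p := by
  have eK : (1:ℝ) • K + (1-1:ℝ) • L = K := by rw [sub_self, one_smul, zero_smul_set ⟨0, hL0⟩, add_zero]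
  have eL : (0:ℝ) • K + (1-0:ℝ) • L = L := by rw [sub_zero, one_smul, zero_smul_set ⟨0, hK0⟩, zero_add]
  rcases hlam.1.eq_or_lt with h0 | h0
  · rw [← h0, eL]; simp
  rcases hlam.2.eq_or_lt with h1 | h1
  · rw [h1, eK]; simp
  rcases (alp_nonneg (ν := n) (p := p) (by positivity) hp).eq_or_lt with ha | ha
  · rw [← ha]; simp
  have mK := mm_pos hp hK hKi
  have mL := mm_pos hp hL hLi
  have mF := fam_pos hp hK hL hKv hLv hK0 hL0 hKi ⟨h0, h1⟩
  have gen : ∀ x : ℝ, 0 < x → Filter.Tendsto (fun η : ℝ => x ^ (alp n p - 2*η)) (nhdsWithin 0 (Ioi 0)) (nhds (x ^ alp n p)) := by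
    intro x hx
    have : ContinuousAt (fun η : ℝ => x ^ (alp n p - 2*η)) 0 :=
      ContinuousAt.rpow continuousAt_const (by fun_prop) (Or.inl hx.ne')
    have h := this.tendsto
    simp only [mul_zero, sub_zero] at h
    exact h.mono_left nhdsWithin_le_nhds
  refine le_of_tendsto_of_tendsto (((gen _ mK).const_mul lam).add ((gen _ mL).const_mul (1-lam))) (gen _ mF) ?_
  filter_upwards [Ioo_mem_nhdsGT (show (0:ℝ) < min 1 (alp n p/2) by positivity)] with η hη
  have a1 := hη.2.trans_le (min_le_left _ _)
  have a2 := hη.2.trans_le (min_le_right _ _)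
  exact main_beta hn hp hK hL hKv hLv hK0 hL0 hKi hLi hη.1 a1.le (by linarith) ⟨h0, h1⟩

theorem stmt_0 (n : ℕ) (hn : 2 ≤ n) (p : ℝ) (hp : 1 < p)
    (μ : Measure (EuclideanSpace ℝ (Fin n)))
    (hμ : μ = volume.withDensity (fun x => ENNReal.ofReal
      (Real.Gamma ((n : ℝ) / 2) / (2 * Real.pi ^ ((n : ℝ) / 2) * p ^ ((n : ℝ) / p - 1) *
        Real.Gamma ((n : ℝ) / p)) * Real.exp (-‖x‖ ^ p / p))))
    (α : ℝ)
    (hα : α = (1 / (n : ℝ)) * Real.exp ((p - 1) * n / p) * ((p - 1) * n / p) ^ ((n : ℝ) / p) *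
      uiGamma (1 - (n : ℝ) / p) ((p - 1) * n / p))
    (K L : Set (EuclideanSpace ℝ (Fin n)))
    (hKc : IsCompact K) (hKv : Convex ℝ K) (hKi : (interior K).Nonempty) (hK0 : 0 ∈ K)
    (hLc : IsCompact L) (hLv : Convex ℝ L) (hLi : (interior L).Nonempty) (hL0 : 0 ∈ L)
    (lam : ℝ) (hlam : lam ∈ Set.Icc (0 : ℝ) 1) :
    lam * (μ K).toReal ^ α + (1 - lam) * (μ L).toReal ^ α ≤
      (μ (lam • K + (1 - lam) • L)).toReal ^ α := by
  have hα' : α = alp n p := hα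
  set c := Real.Gamma ((n : ℝ) / 2) / (2 * Real.pi ^ ((n : ℝ) / 2) * p ^ ((n : ℝ) / p - 1) *
        Real.Gamma ((n : ℝ) / p)) with hc
  have hc0 : 0 ≤ c := by
    have g1 : 0 < Real.Gamma ((n:ℝ)/2) := Real.Gamma_pos_of_pos (by positivity)
    have g2 : 0 < Real.Gamma ((n:ℝ)/p) := Real.Gamma_pos_of_pos (by positivity)
    positivity
  have key : ∀ S : Set (EuclideanSpace ℝ (Fin n)), IsCompact S → (μ S).toReal = c * mm p S := by
    intro S hS
    rw [hμ, withDensity_apply _ hS.measurableSet, ← ofReal_integral_eq_lintegral_ofReal ((exp_int hp hS).integrable.const_mul c)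
      (Filter.Eventually.of_forall fun x => by positivity), integral_const_mul, ENNReal.toReal_ofReal, mm]
    exact mul_nonneg hc0 (setIntegral_nonneg hS.measurableSet fun x _ => (Real.exp_pos _).le)
  have m0 : ∀ S : Set (EuclideanSpace ℝ (Fin n)), IsCompact S → 0 ≤ mm p S := fun S hS =>
    setIntegral_nonneg hS.measurableSet fun x _ => (Real.exp_pos _).le
  have hF := fam_compact hKc hLc lam
  rw [key K hKc, key L hLc, key _ hF, Real.mul_rpow hc0 (m0 K hKc), Real.mul_rpow hc0 (m0 L hLc),
    Real.mul_rpow hc0 (m0 _ hF), hα']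
  have h := main_alp hn hp hKc hLc hKv hLv hK0 hL0 hKi hLi hlam
  have h2 := mul_le_mul_of_nonneg_left h (Real.rpow_nonneg hc0 (alp n p))
  linarith
end

section
/- Let n ≥ 2, p ≥ 1, and let q > 0 satisfy q > 1 - (p/(n-1)) · Γ((n+p-2)/p) · Γ(n/p) / Γ((n-1)/p)². Then there exist convex bodies K, L in ℝⁿ containing the origin and λ ∈ (0,1) such that μ_p(λK + (1-λ)L)^q < λ·μ_p(K)^q + (1-λ)·μ_p(L)^q. -/
open MeasureTheory Real Set Pointwise
open Filter Topology

lemma aux_rpow_taylor (A q : ℝ) (hA : 0 < A) :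
    ∃ r : ℝ → ℝ, Tendsto r (𝓝 A) (𝓝 (q * (q - 1) * A ^ (q - 2) / 2)) ∧
      ∀ u, u ^ q = A ^ q + q * A ^ (q - 1) * (u - A) + r u * (u - A) ^ 2 := by
  set f : ℝ → ℝ := fun u => (u ^ q - A ^ q - q * A ^ (q - 1) * (u - A)) / (u - A) ^ 2 with hf
  have key : Tendsto f (𝓝[≠] A) (𝓝 (q * (q - 1) * A ^ (q - 2) / 2)) := by
    have hpos : ∀ᶠ u in 𝓝[≠] A, 0 < u :=
      (eventually_gt_nhds hA).filter_mono nhdsWithin_le_nhds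
    refine HasDerivAt.lhopital_zero_nhdsNE (f' := fun u => q * u ^ (q - 1) - q * A ^ (q - 1))
      (g' := fun u => 2 * (u - A)) ?_ ?_ ?_ ?_ ?_ ?_
    · filter_upwards [hpos] with u hu
      have h1 := (Real.hasDerivAt_rpow_const (p := q) (Or.inl hu.ne')).sub_const (A ^ q)
      have h2 := ((hasDerivAt_id u).sub_const A).const_mul (q * A ^ (q - 1))
      have h3 := h1.sub h2
      simp only [mul_one] at h3
      exact h3
    · filter_upwards with u
      have h2 := ((hasDerivAt_id u).sub_const A).pow 2
      simp only [Nat.cast_ofNat, Nat.add_one_sub_one, pow_one, mul_one, id] at h2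
      exact h2
    · filter_upwards [self_mem_nhdsWithin] with u hu
      have : u - A ≠ 0 := sub_ne_zero.2 hu
      simpa using this
    · have : ContinuousAt (fun u : ℝ => u ^ q - A ^ q - q * A ^ (q - 1) * (u - A)) A := by
        have := Real.continuousAt_rpow_const A q (Or.inl hA.ne')
        fun_prop
      have h := this.tendsto
      simp only [sub_self, mul_zero] at h
      exact h.mono_left nhdsWithin_le_nhds
    · have : ContinuousAt (fun u : ℝ => (u - A) ^ 2) A := by fun_prop
      have h := this.tendsto
      simp only [sub_self] at h
      norm_num at h
      exact h.mono_left nhdsWithin_le_nhds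
    · have h := (((Real.hasDerivAt_rpow_const (p := q - 1) (Or.inl hA.ne')).const_mul q)).tendsto_slope
      have h' := h.div_const 2
      have e : q * ((q - 1) * A ^ (q - 1 - 1)) / 2 = q * (q - 1) * A ^ (q - 2) / 2 := by
        rw [show q - 1 - 1 = q - 2 by ring]; ring
      rw [e] at h'
      refine h'.congr' ?_
      filter_upwards [self_mem_nhdsWithin] with u hu
      have : u - A ≠ 0 := sub_ne_zero.2 hu
      simp only [slope_def_field]
      field_simp
  refine ⟨Function.update f A (q * (q - 1) * A ^ (q - 2) / 2), ?_, ?_⟩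
  · have := (continuousAt_update_same (f := f) (x := A)
      (y := (q * (q - 1) * A ^ (q - 2) / 2))).2 key
    have h := this.tendsto
    simpa using h
  · intro u
    by_cases hu : u = A
    · subst hu; simp
    · have : u - A ≠ 0 := sub_ne_zero.2 hu
      rw [Function.update_of_ne hu]
      simp only [hf]
      field_simp
      ring

lemma aux_midpoint (G : ℝ → ℝ) (G1 a q : ℝ) (h0 : 0 < G 0) (hq : 0 < q)
    (hT : Tendsto (fun t => (G t - G 0 - G1 * t) / t ^ 2) (𝓝[>] 0) (𝓝 a))
    (hpos : 0 < 2 * a * G 0 + (q - 1) * G1 ^ 2) :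
    ∃ t > 0, G (t / 2) ^ q < 1 / 2 * G 0 ^ q + 1 / 2 * G t ^ q := by
  obtain ⟨r, hr, hru⟩ := aux_rpow_taylor (G 0) q h0
  have hid : Tendsto (fun t : ℝ => t) (𝓝[>] 0) (𝓝 0) := tendsto_id.mono_left nhdsWithin_le_nhds
  have hS : Tendsto (fun t => (G t - G 0) / t) (𝓝[>] 0) (𝓝 G1) := by
    have h := (hT.mul hid).add_const G1
    simp only [mul_zero, zero_add] at h
    refine h.congr' ?_
    filter_upwards [self_mem_nhdsWithin] with t ht
    have : t ≠ 0 := ne_of_gt ht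
    field_simp
    ring
  have hG : Tendsto G (𝓝[>] 0) (𝓝 (G 0)) := by
    have h := (hS.mul hid).add_const (G 0)
    simp only [mul_zero, zero_add] at h
    refine h.congr' ?_
    filter_upwards [self_mem_nhdsWithin] with t ht
    have : t ≠ 0 := ne_of_gt ht
    field_simp
    ring
  set b := q * (q - 1) * G 0 ^ (q - 2) / 2 * G1 ^ 2 + q * G 0 ^ (q - 1) * a with hb
  have hbpos : 0 < b := by
    have e : G 0 ^ (q - 1) = G 0 ^ (q - 2) * G 0 := by
      rw [← Real.rpow_add_one h0.ne']; congr 1; ring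
    have : b = q * G 0 ^ (q - 2) / 2 * (2 * a * G 0 + (q - 1) * G1 ^ 2) := by
      rw [hb, e]; ring
    rw [this]
    have := Real.rpow_pos_of_pos h0 (q - 2)
    positivity
  have hN : Tendsto (fun t => (G t ^ q - G 0 ^ q - q * G 0 ^ (q - 1) * G1 * t) / t ^ 2)
      (𝓝[>] 0) (𝓝 b) := by
    have h := ((hr.comp hG).mul (hS.pow 2)).add (hT.const_mul (q * G 0 ^ (q - 1)))
    refine h.congr' ?_
    filter_upwards [self_mem_nhdsWithin] with t ht
    have : t ≠ 0 := ne_of_gt ht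
    rw [hru (G t)]
    simp only [Function.comp]
    field_simp
    ring
  have hhalf : Tendsto (fun t : ℝ => t / 2) (𝓝[>] 0) (𝓝[>] 0) := by
    refine tendsto_nhdsWithin_iff.2 ⟨?_, ?_⟩
    · simpa using hid.div_const 2
    · filter_upwards [self_mem_nhdsWithin] with t ht
      exact half_pos (mem_Ioi.1 ht)
  have hF := (hN.const_mul (1/2)).sub ((hN.comp hhalf).const_mul (1/4))
  have hlim : 0 < 1 / 2 * b - 1 / 4 * b := by linarith
  obtain ⟨t, ht, htpos⟩ := ((hF.eventually (lt_mem_nhds hlim)).and self_mem_nhdsWithin).exists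
  have htpos : 0 < t := htpos
  refine ⟨t, htpos, ?_⟩
  simp only [Function.comp] at ht
  have h2 := mul_pos ht (pow_pos htpos 2)
  have e : (1 / 2 * ((G t ^ q - G 0 ^ q - q * G 0 ^ (q - 1) * G1 * t) / t ^ 2) -
      1 / 4 * ((G (t / 2) ^ q - G 0 ^ q - q * G 0 ^ (q - 1) * G1 * (t / 2)) / (t / 2) ^ 2)) * t ^ 2
      = 1 / 2 * G 0 ^ q + 1 / 2 * G t ^ q - G (t / 2) ^ q := by
    field_simp
    ring
  linarith

noncomputable def gg (p s : ℝ) : ℝ := Real.exp (-|s| ^ p / p)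

lemma gg_pos (p s : ℝ) : 0 < gg p s := Real.exp_pos _

lemma gg_le_one (p s : ℝ) (hp : 1 ≤ p) : gg p s ≤ 1 := by
  unfold gg
  rw [Real.exp_le_one_iff, neg_div]
  have := Real.rpow_nonneg (abs_nonneg s) p
  have : 0 ≤ |s| ^ p / p := by positivity
  linarith

lemma gg_cont (p : ℝ) (hp : 1 ≤ p) : Continuous (gg p) := by
  unfold gg
  have : Continuous (fun s : ℝ => |s| ^ p) := continuous_abs.rpow_const (fun x => Or.inr (by linarith))
  fun_prop

lemma gg_integrable (p : ℝ) (hp : 1 ≤ p) (k : ℕ) :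
    IntegrableOn (fun s => s ^ k * gg p s) (Ioi 0) := by
  have h := integrableOn_rpow_mul_exp_neg_mul_rpow (p := p) (s := k) (b := 1 / p)
    (by have : (0:ℝ) ≤ k := k.cast_nonneg
        linarith) (by linarith) (by positivity)
  refine h.congr_fun (fun s hs => ?_) measurableSet_Ioi
  have : 0 < s := hs
  simp only [gg, Real.rpow_natCast, abs_of_pos this]
  congr 2; ring

noncomputable def MM (p : ℝ) (k : ℕ) : ℝ := ∫ s in Ioi (0:ℝ), s ^ k * gg p s

lemma MM_eq (p : ℝ) (hp : 1 ≤ p) (k : ℕ) :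
    MM p k = p ^ (((k:ℝ) + 1) / p) / p * Real.Gamma (((k:ℝ) + 1) / p) := by
  have h := integral_rpow_mul_exp_neg_mul_rpow (p := p) (q := k) (b := 1 / p)
    (by linarith) (by have : (0:ℝ) ≤ k := k.cast_nonneg
                      linarith)  (by positivity)
  unfold MM
  rw [show p ^ (((k:ℝ) + 1) / p) / p = (1 / p) ^ (-((k:ℝ) + 1) / p) * (1 / p) by
    rw [one_div, Real.inv_rpow (by linarith), neg_div, Real.rpow_neg (by linarith), inv_inv]; ring]
  rw [← h]
  refine setIntegral_congr_fun measurableSet_Ioi (fun s hs => ?_)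
  have : 0 < s := hs
  simp only [gg, Real.rpow_natCast, abs_of_pos this]
  congr 2; ring

lemma MM_pos (p : ℝ) (hp : 1 ≤ p) (k : ℕ) : 0 < MM p k := by
  rw [MM_eq p hp]
  have := Real.Gamma_pos_of_pos (s := ((k:ℝ) + 1) / p) (by positivity)
  positivity

noncomputable def GG (p : ℝ) (m : ℕ) (t : ℝ) : ℝ := ∫ s in Ioi (-t), (s + t) ^ m * gg p s

lemma GG_int0 (p : ℝ) (hp : 1 ≤ p) (m : ℕ) (t : ℝ) :
    IntegrableOn (fun s => (s + t) ^ m * gg p s) (Ioi 0) := by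
  have : (fun s => (s + t) ^ m * gg p s) =
      fun s => ∑ k ∈ Finset.range (m + 1), (t ^ (m - k) * (m.choose k)) * (s ^ k * gg p s) := by
    funext s
    rw [add_pow, Finset.sum_mul]
    refine Finset.sum_congr rfl fun k _ => by ring
  rw [this]
  exact integrable_finsetSum _ fun k _ => (gg_integrable p hp k).const_mul _

lemma GG_int1 (p : ℝ) (hp : 1 ≤ p) (m : ℕ) (t a b : ℝ) :
    IntegrableOn (fun s => (s + t) ^ m * gg p s) (Ioc a b) := by
  have := gg_cont p hp
  have : Continuous (fun s => (s + t) ^ m * gg p s) := by fun_prop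
  exact this.integrableOn_Ioc

lemma GG_int (p : ℝ) (hp : 1 ≤ p) (m : ℕ) (t : ℝ) (ht : 0 ≤ t) :
    IntegrableOn (fun s => (s + t) ^ m * gg p s) (Ioi (-t)) := by
  rw [← Ioc_union_Ioi_eq_Ioi (show -t ≤ 0 by linarith)]
  exact (GG_int1 p hp m t _ _).union (GG_int0 p hp m t)

lemma GG_zero (p : ℝ) (m : ℕ) : GG p m 0 = MM p m := by
  simp [GG, MM]

lemma GG_eq (p : ℝ) (hp : 1 ≤ p) (m : ℕ) (t : ℝ) (ht : 0 ≤ t) :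
    GG p m t = (∑ k ∈ Finset.range (m + 1), (t ^ k * (m.choose k)) * MM p (m - k)) +
      ∫ s in Ioc (-t) 0, (s + t) ^ m * gg p s := by
  unfold GG
  rw [← Ioc_union_Ioi_eq_Ioi (show -t ≤ 0 by linarith),
    setIntegral_union (Ioc_disjoint_Ioi le_rfl) measurableSet_Ioi (GG_int1 p hp m t _ _)
      (GG_int0 p hp m t), add_comm]
  congr 1
  rw [← Finset.sum_range_reflect]
  have : (fun s => (s + t) ^ m * gg p s) =
      fun s => ∑ k ∈ Finset.range (m + 1), (t ^ (m - k) * (m.choose k)) * (s ^ k * gg p s) := by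
    funext s
    rw [add_pow, Finset.sum_mul]
    refine Finset.sum_congr rfl fun k _ => by ring
  rw [this, integral_finsetSum _ fun k _ => (gg_integrable p hp k).const_mul _]
  refine Finset.sum_congr rfl fun k hk => ?_
  have hk : k ≤ m := by simpa [Nat.lt_succ_iff] using hk
  rw [integral_const_mul]
  have e1 : m + 1 - 1 - k = m - k := by omega
  rw [e1, Nat.choose_symm hk, Nat.sub_sub_self hk, MM]

lemma EE_bounds (p : ℝ) (hp : 1 ≤ p) (m : ℕ) (t : ℝ) (ht : 0 ≤ t) :
    gg p t * (t ^ (m + 1) / (m + 1)) ≤ ∫ s in Ioc (-t) 0, (s + t) ^ m * gg p s ∧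
    ∫ s in Ioc (-t) 0, (s + t) ^ m * gg p s ≤ t ^ (m + 1) / (m + 1) := by
  have hI : ∫ s in Ioc (-t) 0, (s + t) ^ m = t ^ (m + 1) / (m + 1) := by
    rw [← intervalIntegral.integral_of_le (by linarith)]
    rw [intervalIntegral.integral_comp_add_right (fun x => x ^ m)]
    simp
  have hc : Continuous fun s : ℝ => (s + t) ^ m := by fun_prop
  constructor
  · rw [← hI, ← integral_const_mul]
    refine setIntegral_mono_on (hc.integrableOn_Ioc.const_mul _) (GG_int1 p hp m t _ _)
      measurableSet_Ioc fun s hs => ?_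
    rw [mul_comm]
    have h1 : 0 ≤ s + t := by linarith [hs.1]
    refine mul_le_mul_of_nonneg_left ?_ (by positivity)
    unfold gg
    have h2 : |s| ≤ |t| := by
      rw [abs_of_nonneg ht, abs_of_nonpos hs.2]; linarith
    gcongr
  · rw [← hI]
    refine setIntegral_mono_on (GG_int1 p hp m t _ _) hc.integrableOn_Ioc
      measurableSet_Ioc fun s hs => ?_
    have h1 : 0 ≤ s + t := by linarith [hs.1]
    exact mul_le_of_le_one_right (by positivity) (gg_le_one p s hp)

lemma EE_lim (p : ℝ) (hp : 1 ≤ p) (m : ℕ) :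
    Tendsto (fun t => (∫ s in Ioc (-t) 0, (s + t) ^ (m + 1) * gg p s) / t ^ 2) (𝓝[>] 0)
      (𝓝 (0 ^ m / ((m:ℝ) + 2))) := by
  have h2 : Tendsto (fun t : ℝ => t ^ m / ((m : ℝ) + 2)) (𝓝[>] 0) (𝓝 (0 ^ m / ((m:ℝ) + 2))) := by
    have : Continuous (fun t : ℝ => t ^ m / ((m : ℝ) + 2)) := by fun_prop
    exact (this.tendsto 0).mono_left nhdsWithin_le_nhds
  have h1 : Tendsto (fun t : ℝ => gg p t * (t ^ m / ((m : ℝ) + 2))) (𝓝[>] 0)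
      (𝓝 (0 ^ m / ((m:ℝ) + 2))) := by
    have h := (((gg_cont p hp).tendsto 0).mono_left nhdsWithin_le_nhds).mul h2
    have : gg p 0 = 1 := by
      simp [gg, Real.zero_rpow (show p ≠ 0 by linarith)]
    simpa [this] using h
  refine tendsto_of_tendsto_of_tendsto_of_le_of_le' h1 h2 ?_ ?_
  · filter_upwards [self_mem_nhdsWithin] with t ht
    have ht : 0 < t := ht
    rw [le_div_iff₀ (by positivity)]
    refine le_trans (le_of_eq ?_) (EE_bounds p hp (m+1) t ht.le).1
    push_cast
    ring
  · filter_upwards [self_mem_nhdsWithin] with t ht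
    have ht : 0 < t := ht
    rw [div_le_iff₀ (by positivity)]
    refine le_trans (EE_bounds p hp (m+1) t ht.le).2 (le_of_eq ?_)
    push_cast
    ring

lemma GG_taylor (p : ℝ) (hp : 1 ≤ p) (m : ℕ) :
    Tendsto (fun t => (GG p (m + 1) t - GG p (m + 1) 0 - ((m:ℝ) + 1) * MM p m * t) / t ^ 2)
      (𝓝[>] 0) (𝓝 (((m + 1).choose 2 : ℝ) * MM p (m + 1 - 2) + 0 ^ m / ((m:ℝ) + 2))) := by
  have hP : Tendsto (fun t : ℝ => ∑ k ∈ Finset.range m,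
      (t ^ k * ((m + 1).choose (k + 2))) * MM p (m + 1 - (k + 2)))
      (𝓝[>] 0) (𝓝 (((m + 1).choose 2 : ℝ) * MM p (m + 1 - 2))) := by
    have hc : Continuous (fun t : ℝ => ∑ k ∈ Finset.range m,
      (t ^ k * ((m + 1).choose (k + 2))) * MM p (m + 1 - (k + 2))) := by fun_prop
    have h := (hc.tendsto 0).mono_left (nhdsWithin_le_nhds (s := Ioi 0))
    convert h using 2
    rcases m with _ | m
    · simp
    · rw [Finset.sum_range_succ']; simp
  refine (hP.add (EE_lim p hp m)).congr' ?_
  filter_upwards [self_mem_nhdsWithin] with t ht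
  have ht : 0 < t := ht
  rw [GG_eq p hp _ t ht.le, GG_zero, Finset.sum_range_succ', Finset.sum_range_succ']
  rw [eq_div_iff (by positivity), add_mul, div_mul_cancel₀ _ (by positivity), Finset.sum_mul]
  have e : ∀ k, t ^ k * ((m + 1).choose (k + 2) : ℝ) * MM p (m + 1 - (k + 2)) * t ^ 2 =
    t ^ (k + 1 + 1) * ((m + 1).choose (k + 1 + 1) : ℝ) * MM p (m + 1 - (k + 1 + 1)) := by
    intro k; ring
  simp only [e]
  simp
  ring

lemma G2_eq (p : ℝ) (hp : 1 ≤ p) (m : ℕ) :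
    2 * (((m + 1).choose 2 : ℝ) * MM p (m + 1 - 2) + 0 ^ m / ((m:ℝ) + 2)) =
      ((m:ℝ) + 1) * (p ^ ((m:ℝ) / p) * Real.Gamma (((m:ℝ) + p) / p)) := by
  have hp0 : p ≠ 0 := by linarith
  rcases m with _ | m
  · simp [hp0]
  · rw [MM_eq p hp]
    have h1 : (((m + 1 : ℕ) : ℝ) + p) / p = ((m : ℝ) + 1) / p + 1 := by
      push_cast; field_simp
    rw [h1, Real.Gamma_add_one (by positivity), Nat.cast_choose_two]
    have : m + 1 + 1 - 2 = m := by omega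
    rw [this]
    push_cast
    simp
    field_simp

lemma exists_t (p : ℝ) (hp : 1 ≤ p) (m : ℕ) (q : ℝ) (hq : 0 < q)
    (hq' : 1 - p / ((m : ℝ) + 1) *
      (Real.Gamma (((m : ℝ) + p) / p) * Real.Gamma (((m : ℝ) + 2) / p) /
        Real.Gamma (((m : ℝ) + 1) / p) ^ 2) < q) :
    ∃ t > 0, GG p (m + 1) (t / 2) ^ q <
      1 / 2 * GG p (m + 1) 0 ^ q + 1 / 2 * GG p (m + 1) t ^ q := by
  have h0 : 0 < GG p (m + 1) 0 := by rw [GG_zero]; exact MM_pos p hp _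
  refine aux_midpoint (GG p (m + 1)) _ _ q h0 hq (GG_taylor p hp m) ?_
  rw [G2_eq p hp, GG_zero, MM_eq p hp, MM_eq p hp]
  have hp0 : 0 < p := by linarith
  have g1 := Real.Gamma_pos_of_pos (s := ((m : ℝ) + 1) / p) (by positivity)
  have e1 : (((m + 1 : ℕ) : ℝ) + 1) / p = ((m : ℝ) + 2) / p := by push_cast; ring
  rw [e1]
  set A := Real.Gamma (((m : ℝ) + p) / p)
  set B := Real.Gamma (((m : ℝ) + 2) / p)
  set C := Real.Gamma (((m : ℝ) + 1) / p)
  set X := p ^ (((m:ℝ) + 1) / p) with hX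
  have hXpos : 0 < X := by positivity
  have e2 : p ^ ((m:ℝ) / p) * p ^ (((m:ℝ) + 2) / p) = X ^ 2 := by
    rw [hX, ← Real.rpow_add hp0, ← Real.rpow_natCast, ← Real.rpow_mul hp0.le]
    congr 1; push_cast; ring
  have e3 : ((m:ℝ) + 1) * (p ^ ((m:ℝ) / p) * A) * (p ^ (((m:ℝ) + 2) / p) / p * B) +
      (q - 1) * (((m:ℝ) + 1) * (X / p * C)) ^ 2 =
      (((m:ℝ) + 1) * X / p * C) ^ 2 * (q - (1 - p / ((m : ℝ) + 1) * (A * B / C ^ 2))) := by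
    have : ((m:ℝ) + 1) * (p ^ ((m:ℝ) / p) * A) * (p ^ (((m:ℝ) + 2) / p) / p * B) =
      (p ^ ((m:ℝ) / p) * p ^ (((m:ℝ) + 2) / p)) * (((m:ℝ) + 1) * A * B / p) := by ring
    rw [this, e2]
    field_simp
    ring
  rw [e3]
  have : 0 < q - (1 - p / ((m : ℝ) + 1) * (A * B / C ^ 2)) := by linarith
  positivity

def cone (m : ℕ) (t ε R : ℝ) : Set (EuclideanSpace ℝ (Fin (m + 1))) :=
  {x | x 0 ≤ R ∧ ∀ i : Fin m, |x i.succ| ≤ ε * (x 0 + t)}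

lemma cone_ge (m : ℕ) (hm : 1 ≤ m) (t ε R : ℝ) (hε : 0 < ε) (x) (hx : x ∈ cone m t ε R) :
    0 ≤ x 0 + t := by
  have h := (abs_nonneg _).trans (hx.2 ⟨0, hm⟩)
  exact nonneg_of_mul_nonneg_right h hε

lemma cone_norm_le (m : ℕ) (t ε R : ℝ) (x) (hx : x ∈ cone m t ε R) :
    ‖x‖ ≤ |x 0| + m * (ε * (x 0 + t)) := by
  have h1 : ‖x‖ ≤ ∑ i, |x i| := by
    rw [EuclideanSpace.norm_eq]
    refine (Real.sqrt_le_left (Finset.sum_nonneg fun i _ => abs_nonneg _)).2 ?_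
    simp only [Real.norm_eq_abs]
    exact Finset.sum_sq_le_sq_sum_of_nonneg fun i _ => abs_nonneg _
  refine h1.trans ?_
  rw [Fin.sum_univ_succ]
  gcongr
  refine (Finset.sum_le_sum fun i _ => hx.2 i).trans ?_
  simp

lemma cone_comb (m : ℕ) (s t ε R a b : ℝ) (ha : 0 ≤ a) (hb : 0 ≤ b) (hab : a + b = 1)
    (x y) (hx : x ∈ cone m s ε R) (hy : y ∈ cone m t ε R) :
    a • x + b • y ∈ cone m (a * s + b * t) ε R := by
  refine ⟨?_, fun i => ?_⟩
  · simp only [PiLp.add_apply, PiLp.smul_apply, smul_eq_mul]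
    have h1 := mul_le_mul_of_nonneg_left hx.1 ha
    have h2 := mul_le_mul_of_nonneg_left hy.1 hb
    have : a * R + b * R = R := by rw [← add_mul, hab, one_mul]
    linarith
  · simp only [PiLp.add_apply, PiLp.smul_apply, smul_eq_mul]
    have h1 := mul_le_mul_of_nonneg_left (hx.2 i) ha
    have h2 := mul_le_mul_of_nonneg_left (hy.2 i) hb
    have h3 := abs_add_le (a * x i.succ) (b * y i.succ)
    rw [abs_mul, abs_mul, abs_of_nonneg ha, abs_of_nonneg hb] at h3
    linarith

lemma cone_convex (m : ℕ) (t ε R : ℝ) : Convex ℝ (cone m t ε R) := by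
  intro x hx y hy a b ha hb hab
  have := cone_comb m t t ε R a b ha hb hab x y hx hy
  rwa [← add_mul, hab, one_mul] at this

lemma cone_closed (m : ℕ) (t ε R : ℝ) : IsClosed (cone m t ε R) := by
  have : cone m t ε R = {x | x 0 ≤ R} ∩ ⋂ i : Fin m, {x | |x i.succ| ≤ ε * (x 0 + t)} := by
    ext x; simp [cone]
  rw [this]
  refine IsClosed.inter (isClosed_le (by fun_prop) (by fun_prop)) (isClosed_iInter fun i => ?_)
  exact isClosed_le (by fun_prop) (by fun_prop)

lemma cone_compact (m : ℕ) (hm : 1 ≤ m) (t ε R : ℝ) (hε : 0 < ε) :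
    IsCompact (cone m t ε R) := by
  refine Metric.isCompact_of_isClosed_isBounded (cone_closed m t ε R) ?_
  refine isBounded_iff_forall_norm_le.2 ⟨|t| + |R| + m * (ε * (R + t)), fun x hx => ?_⟩
  refine (cone_norm_le m t ε R x hx).trans ?_
  have h1 := cone_ge m hm t ε R hε x hx
  have h2 := hx.1
  gcongr
  rw [abs_le]
  constructor
  · linarith [le_abs_self t, abs_nonneg R]
  · linarith [le_abs_self R, abs_nonneg t]

lemma cone_interior (m : ℕ) (t ε R : ℝ) (ht : 0 ≤ t) (hε : 0 < ε) (hR : 0 < R) :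
    (interior (cone m t ε R)).Nonempty := by
  refine ⟨EuclideanSpace.single 0 (R / 2), ?_⟩
  refine mem_interior.2 ⟨{x | x 0 < R} ∩ ⋂ i : Fin m, {x | |x i.succ| < ε * (x 0 + t)}, ?_, ?_, ?_⟩
  · intro x hx
    simp only [mem_inter_iff, mem_ofPred_eq, mem_iInter] at hx
    exact ⟨hx.1.le, fun i => (hx.2 i).le⟩
  · refine IsOpen.inter (isOpen_lt (by fun_prop) (by fun_prop)) (isOpen_iInter_of_finite fun i => ?_)
    exact isOpen_lt (by fun_prop) (by fun_prop)
  · simp only [mem_inter_iff, mem_ofPred_eq, mem_iInter]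
    refine ⟨by simp; linarith, fun i => ?_⟩
    simp
    positivity

lemma cone_zero (m : ℕ) (t ε R : ℝ) (ht : 0 ≤ t) (hε : 0 < ε) (hR : 0 < R) :
    0 ∈ cone m t ε R := by
  refine ⟨by simpa using hR.le, fun i => ?_⟩
  simp
  positivity

lemma cone_lint (m : ℕ) (hm : 1 ≤ m) (t ε R : ℝ) (hε : 0 < ε) (h : ℝ → ENNReal)
    (hh : Measurable h) :
    ∫⁻ x in cone m t ε R, h (x 0) =
      ∫⁻ s in Icc (-t) R, ENNReal.ofReal ((2 * (ε * (s + t))) ^ m) * h s := by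
  have e1 : MeasurePreserving (fun x : EuclideanSpace ℝ (Fin (m + 1)) =>
      MeasurableEquiv.piFinSuccAbove (fun _ => ℝ) 0 (WithLp.ofLp x)) volume
        (volume : Measure (ℝ × (Fin m → ℝ))) :=
    (volume_preserving_piFinSuccAbove (fun _ : Fin (m + 1) => ℝ) 0).comp
      (PiLp.volume_preserving_ofLp (Fin (m + 1)))
  set S : Set (ℝ × (Fin m → ℝ)) := {z | z.1 ≤ R ∧ ∀ i, |z.2 i| ≤ ε * (z.1 + t)} with hS
  have hSm : MeasurableSet S := by
    have : S = {z | z.1 ≤ R} ∩ ⋂ i : Fin m, {z | |z.2 i| ≤ ε * (z.1 + t)} := by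
      ext x; simp [S]
    rw [this]
    refine (IsClosed.inter (isClosed_le (by fun_prop) (by fun_prop))
      (isClosed_iInter fun i => ?_)).measurableSet
    exact isClosed_le (by fun_prop) (by fun_prop)
  have e2 : ∫⁻ x in cone m t ε R, h (x 0) = ∫⁻ z, S.indicator (fun z => h z.1) z := by
    have hme : Measurable (S.indicator (fun z => h z.1)) :=
      (hh.comp measurable_fst).indicator hSm
    rw [← e1.lintegral_comp hme,
      ← lintegral_indicator (cone_closed m t ε R).measurableSet]
    refine lintegral_congr fun x => ?_
    rfl
  rw [e2, Measure.volume_eq_prod, lintegral_prod _ (by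
    exact ((hh.comp measurable_fst).indicator hSm).aemeasurable),
    ← lintegral_indicator measurableSet_Icc]
  refine lintegral_congr fun s => ?_
  by_cases hs : s ∈ Icc (-t) R
  · rw [indicator_of_mem hs]
    have h0 : 0 ≤ ε * (s + t) := mul_nonneg hε.le (by linarith [hs.1])
    have : ∀ y : Fin m → ℝ, S.indicator (fun z => h z.1) (s, y) =
        (Metric.closedBall (0 : Fin m → ℝ) (ε * (s + t))).indicator (fun _ => h s) y := by
      intro y
      have : (s, y) ∈ S ↔ y ∈ Metric.closedBall (0 : Fin m → ℝ) (ε * (s + t)) := by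
        simp [S, hs.2, pi_norm_le_iff_of_nonneg h0]
      by_cases hy : (s, y) ∈ S
      · rw [indicator_of_mem hy, indicator_of_mem (this.1 hy)]
      · rw [indicator_of_notMem hy, indicator_of_notMem (fun h => hy (this.2 h))]
    simp only [this]
    rw [lintegral_indicator measurableSet_closedBall, setLIntegral_const,
      Real.volume_pi_closedBall _ h0, mul_comm]
    simp
  · rw [indicator_of_notMem hs]
    have : ∀ y : Fin m → ℝ, S.indicator (fun z => h z.1) (s, y) = 0 := by
      intro y
      refine indicator_of_notMem (fun hz => hs ⟨?_, hz.1⟩) _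
      have := (abs_nonneg _).trans (hz.2 ⟨0, hm⟩)
      have := nonneg_of_mul_nonneg_right this hε
      simp only at this
      linarith
    simp [this]

noncomputable def kk (p : ℝ) (m : ℕ) (t ε s : ℝ) : ℝ :=
  Real.exp (-(|s| + m * (ε * (s + t))) ^ p / p)

noncomputable def HH (p : ℝ) (m : ℕ) (t ε : ℝ) : ℝ :=
  ∫ s in Ioc (-t) (1 / ε), (s + t) ^ m * kk p m t ε s

lemma kk_cont (p : ℝ) (hp : 1 ≤ p) (m : ℕ) (t ε : ℝ) : Continuous (kk p m t ε) := by
  unfold kk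
  have : Continuous (fun s : ℝ => (|s| + m * (ε * (s + t))) ^ p) :=
    Continuous.rpow_const (by fun_prop) (fun x => Or.inr (by linarith))
  fun_prop

lemma HH_tendsto (p : ℝ) (hp : 1 ≤ p) (m : ℕ) (t : ℝ) (ht : 0 ≤ t) :
    Tendsto (HH p m t) (𝓝[>] 0) (𝓝 (GG p m t)) := by
  have e : HH p m t = fun ε => ∫ s in Ioi (-t),
      (Iic (1 / ε)).indicator (fun s => (s + t) ^ m * kk p m t ε s) s := by
    funext ε
    rw [setIntegral_indicator measurableSet_Iic, Ioi_inter_Iic, HH]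
  rw [e]
  unfold GG
  refine tendsto_integral_filter_of_dominated_convergence (fun s => (s + t) ^ m * gg p s)
    ?_ ?_ (GG_int p hp m t ht) ?_
  · filter_upwards with ε
    have := kk_cont p hp m t ε
    have hc : Continuous (fun s => (s + t) ^ m * kk p m t ε s) := by fun_prop
    exact (hc.measurable.indicator measurableSet_Iic).aestronglyMeasurable
  · filter_upwards [self_mem_nhdsWithin] with ε hε
    have hε : 0 < ε := hε
    refine (ae_restrict_iff' measurableSet_Ioi).2 (Eventually.of_forall fun s hs => ?_)
    have h1 : 0 ≤ s + t := by linarith [mem_Ioi.1 hs]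
    have hb : 0 ≤ (s + t) ^ m * kk p m t ε s := mul_nonneg (by positivity) (Real.exp_pos _).le
    refine (norm_indicator_le_norm_self _ _).trans ?_
    rw [Real.norm_of_nonneg hb]
    unfold kk gg
    have : |s| ≤ |s| + m * (ε * (s + t)) := by
      have : 0 ≤ m * (ε * (s + t)) := by positivity
      linarith
    gcongr
  · refine Eventually.of_forall fun s => ?_
    have h1 : Tendsto (fun ε : ℝ => (s + t) ^ m * kk p m t ε s) (𝓝[>] 0)
        (𝓝 ((s + t) ^ m * gg p s)) := by
      have hc : Continuous (fun ε : ℝ => (s + t) ^ m * kk p m t ε s) := by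
        unfold kk
        have : Continuous (fun ε : ℝ => (|s| + m * (ε * (s + t))) ^ p) :=
          Continuous.rpow_const (by fun_prop) (fun x => Or.inr (by linarith))
        fun_prop
      have := (hc.tendsto 0).mono_left (nhdsWithin_le_nhds (s := Ioi 0))
      simpa [kk, gg] using this
    refine h1.congr' ?_
    have h2 : Tendsto (fun ε : ℝ => 1 / ε) (𝓝[>] 0) atTop := by
      simpa using tendsto_inv_nhdsGT_zero (𝕜 := ℝ)
    filter_upwards [h2.eventually_ge_atTop s] with ε hε
    rw [indicator_of_mem (mem_Iic.2 hε)]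

lemma cone_upper (p : ℝ) (hp : 1 ≤ p) (m : ℕ) (hm : 1 ≤ m) (t ε c R : ℝ) (ht : 0 ≤ t) (hε : 0 < ε)
    (hc : 0 < c) (μ : Measure (EuclideanSpace ℝ (Fin (m + 1))))
    (hμ : μ = volume.withDensity (fun x => ENNReal.ofReal (c * Real.exp (-‖x‖ ^ p / p)))) :
    μ (cone m t ε R) ≤ ENNReal.ofReal (c * (2 * ε) ^ m * GG p m t) := by
  have hmeas : Measurable fun s => ENNReal.ofReal (c * gg p s) := by
    have := gg_cont p hp
    fun_prop
  rw [hμ, withDensity_apply _ (cone_closed m t ε R).measurableSet]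
  calc _ ≤ ∫⁻ x in cone m t ε R, ENNReal.ofReal (c * gg p (x 0)) := by
        refine lintegral_mono fun x => ?_
        have : |x 0| ≤ ‖x‖ := PiLp.norm_apply_le x 0
        unfold gg
        gcongr
    _ = ∫⁻ s in Icc (-t) R, ENNReal.ofReal ((2 * (ε * (s + t))) ^ m) *
          ENNReal.ofReal (c * gg p s) := cone_lint m hm t ε R hε _ hmeas
    _ = ∫⁻ s in Ioc (-t) R, ENNReal.ofReal ((2 * (ε * (s + t))) ^ m) *
          ENNReal.ofReal (c * gg p s) := (setLIntegral_congr Ioc_ae_eq_Icc).symm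
    _ ≤ ∫⁻ s in Ioi (-t), ENNReal.ofReal ((2 * (ε * (s + t))) ^ m) *
          ENNReal.ofReal (c * gg p s) := lintegral_mono_set Ioc_subset_Ioi_self
    _ = ∫⁻ s in Ioi (-t), ENNReal.ofReal (c * (2 * ε) ^ m * ((s + t) ^ m * gg p s)) := by
        refine setLIntegral_congr_fun measurableSet_Ioi fun s hs => ?_
        have h1 : 0 ≤ s + t := by linarith [mem_Ioi.1 hs]
        rw [← ENNReal.ofReal_mul (by positivity), ← mul_assoc 2, mul_pow]
        congr 1; ring
    _ = _ := by
        rw [← ofReal_integral_eq_lintegral_ofReal ((GG_int p hp m t ht).const_mul _),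
          integral_const_mul, GG]
        refine (ae_restrict_iff' measurableSet_Ioi).2 (Eventually.of_forall fun s hs => ?_)
        have h1 : 0 ≤ s + t := by linarith [mem_Ioi.1 hs]
        have := gg_pos p s
        simp only [Pi.zero_apply]
        positivity

lemma cone_lower (p : ℝ) (hp : 1 ≤ p) (m : ℕ) (hm : 1 ≤ m) (t ε c : ℝ) (hε : 0 < ε)
    (hc : 0 < c) (μ : Measure (EuclideanSpace ℝ (Fin (m + 1))))
    (hμ : μ = volume.withDensity (fun x => ENNReal.ofReal (c * Real.exp (-‖x‖ ^ p / p)))) :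
    ENNReal.ofReal (c * (2 * ε) ^ m * HH p m t ε) ≤ μ (cone m t ε (1 / ε)) := by
  have hk := kk_cont p hp m t ε
  have hmeas : Measurable fun s => ENNReal.ofReal (c * kk p m t ε s) := by
    fun_prop
  have hcont : Continuous fun s => (s + t) ^ m * kk p m t ε s := by fun_prop
  rw [hμ, withDensity_apply _ (cone_closed m t ε _).measurableSet]
  rw [← ge_iff_le]
  calc _ ≥ ∫⁻ x in cone m t ε (1 / ε), ENNReal.ofReal (c * kk p m t ε (x 0)) := by
        refine setLIntegral_mono' (cone_closed m t ε _).measurableSet fun x hx => ?_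
        have := cone_norm_le m t ε _ x hx
        unfold kk
        gcongr
    _ = ∫⁻ s in Icc (-t) (1 / ε), ENNReal.ofReal ((2 * (ε * (s + t))) ^ m) *
          ENNReal.ofReal (c * kk p m t ε s) := cone_lint m hm t ε _ hε _ hmeas
    _ = ∫⁻ s in Ioc (-t) (1 / ε), ENNReal.ofReal ((2 * (ε * (s + t))) ^ m) *
          ENNReal.ofReal (c * kk p m t ε s) := (setLIntegral_congr Ioc_ae_eq_Icc).symm
    _ = ∫⁻ s in Ioc (-t) (1 / ε),
          ENNReal.ofReal (c * (2 * ε) ^ m * ((s + t) ^ m * kk p m t ε s)) := by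
        refine setLIntegral_congr_fun measurableSet_Ioc fun s hs => ?_
        have h1 : 0 ≤ s + t := by linarith [hs.1]
        rw [← ENNReal.ofReal_mul (by positivity), ← mul_assoc 2, mul_pow]
        congr 1; ring
    _ = _ := by
        rw [← ofReal_integral_eq_lintegral_ofReal (hcont.integrableOn_Ioc.const_mul _),
          integral_const_mul, HH]
        refine (ae_restrict_iff' measurableSet_Ioc).2 (Eventually.of_forall fun s hs => ?_)
        have h1 : 0 ≤ s + t := by linarith [hs.1]
        have : 0 < kk p m t ε s := Real.exp_pos _
        simp only [Pi.zero_apply]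
        positivity

lemma HH_nonneg (p : ℝ) (m : ℕ) (t ε : ℝ) : 0 ≤ HH p m t ε := by
  refine setIntegral_nonneg measurableSet_Ioc fun s hs => ?_
  have h1 : 0 ≤ s + t := by linarith [hs.1]
  have : 0 < kk p m t ε s := Real.exp_pos _
  positivity

lemma GG_nonneg (p : ℝ) (m : ℕ) (t : ℝ) : 0 ≤ GG p m t := by
  refine setIntegral_nonneg measurableSet_Ioi fun s hs => ?_
  have h1 : 0 ≤ s + t := by linarith [mem_Ioi.1 hs]
  have := gg_pos p s
  positivity

lemma main_aux (p : ℝ) (hp : 1 ≤ p) (m : ℕ) (hm : 1 ≤ m) (c : ℝ) (hc : 0 < c) (q : ℝ) (hq : 0 < q)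
    (μ : Measure (EuclideanSpace ℝ (Fin (m + 1))))
    (hμ : μ = volume.withDensity (fun x => ENNReal.ofReal (c * Real.exp (-‖x‖ ^ p / p))))
    (t : ℝ) (ht : 0 < t)
    (hlt : GG p m (t / 2) ^ q < 1 / 2 * GG p m 0 ^ q + 1 / 2 * GG p m t ^ q) :
    ∃ K L : Set (EuclideanSpace ℝ (Fin (m + 1))),
      (IsCompact K ∧ Convex ℝ K ∧ (interior K).Nonempty ∧ 0 ∈ K) ∧
      (IsCompact L ∧ Convex ℝ L ∧ (interior L).Nonempty ∧ 0 ∈ L) ∧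
      ∃ lam ∈ Set.Ioo (0 : ℝ) 1,
        (μ (lam • K + (1 - lam) • L)).toReal ^ q <
          lam * (μ K).toReal ^ q + (1 - lam) * (μ L).toReal ^ q := by
  have hlim := (((HH_tendsto p hp m 0 le_rfl).rpow_const (p := q) (Or.inr hq.le)).const_mul
    (1 / 2)).add (((HH_tendsto p hp m t ht.le).rpow_const (p := q) (Or.inr hq.le)).const_mul (1 / 2))
  obtain ⟨ε, h, hε⟩ := ((hlim.eventually (lt_mem_nhds hlt)).and self_mem_nhdsWithin).exists
  have hε : 0 < ε := hε
  have hR : 0 < 1 / ε := by positivity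
  have hfin : ∀ s, 0 ≤ s → μ (cone m s ε (1 / ε)) ≠ ⊤ := fun s hs =>
    ne_top_of_le_ne_top ENNReal.ofReal_ne_top (cone_upper p hp m hm s ε c _ hs hε hc μ hμ)
  have hlow : ∀ s, 0 ≤ s → (c * (2 * ε) ^ m) ^ q * HH p m s ε ^ q ≤
      (μ (cone m s ε (1 / ε))).toReal ^ q := fun s hs => by
    rw [← Real.mul_rpow (by positivity) (HH_nonneg _ _ _ _)]
    refine Real.rpow_le_rpow (mul_nonneg (by positivity) (HH_nonneg _ _ _ _)) ?_ hq.le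
    exact (ENNReal.ofReal_le_iff_le_toReal (hfin s hs)).1 (cone_lower p hp m hm s ε c hε hc μ hμ)
  refine ⟨cone m 0 ε (1 / ε), cone m t ε (1 / ε),
    ⟨cone_compact m hm _ _ _ hε, cone_convex _ _ _ _, cone_interior _ _ _ _ le_rfl hε hR,
      cone_zero _ _ _ _ le_rfl hε hR⟩,
    ⟨cone_compact m hm _ _ _ hε, cone_convex _ _ _ _, cone_interior _ _ _ _ ht.le hε hR,
      cone_zero _ _ _ _ ht.le hε hR⟩, 1 / 2, by constructor <;> norm_num, ?_⟩
  have hsub : (1 / 2 : ℝ) • cone m 0 ε (1 / ε) + (1 - 1 / 2 : ℝ) • cone m t ε (1 / ε) ⊆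
      cone m (t / 2) ε (1 / ε) := by
    rintro _ ⟨_, ⟨x, hx, rfl⟩, _, ⟨y, hy, rfl⟩, rfl⟩
    have := cone_comb m 0 t ε (1 / ε) (1 / 2) (1 - 1 / 2) (by norm_num) (by norm_num) (by norm_num)
      x y hx hy
    rwa [show (1 / 2 : ℝ) * 0 + (1 - 1 / 2) * t = t / 2 by ring] at this
  have hup : (μ ((1 / 2 : ℝ) • cone m 0 ε (1 / ε) + (1 - 1 / 2 : ℝ) • cone m t ε (1 / ε))).toReal ^ q
      ≤ (c * (2 * ε) ^ m) ^ q * GG p m (t / 2) ^ q := by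
    rw [← Real.mul_rpow (by positivity) (GG_nonneg _ _ _)]
    refine Real.rpow_le_rpow ENNReal.toReal_nonneg ?_ hq.le
    refine ENNReal.toReal_le_of_le_ofReal (mul_nonneg (by positivity) (GG_nonneg _ _ _)) ?_
    exact (measure_mono hsub).trans (cone_upper p hp m hm _ ε c _ (by positivity) hε hc μ hμ)
  have hC : 0 < (c * (2 * ε) ^ m) ^ q := by positivity
  have h3 := mul_lt_mul_of_pos_left h hC
  have h4 := hlow 0 le_rfl
  have h5 := hlow t ht.le
  linarith

theorem stmt_1 (n : ℕ) (hn : 2 ≤ n) (p : ℝ) (hp : 1 ≤ p)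
    (μ : Measure (EuclideanSpace ℝ (Fin n)))
    (hμ : μ = volume.withDensity (fun x => ENNReal.ofReal
      (Real.Gamma ((n : ℝ) / 2) / (2 * Real.pi ^ ((n : ℝ) / 2) * p ^ ((n : ℝ) / p - 1) *
        Real.Gamma ((n : ℝ) / p)) * Real.exp (-‖x‖ ^ p / p))))
    (q : ℝ) (hq : 0 < q)
    (hq' : 1 - p / ((n : ℝ) - 1) *
      (Real.Gamma (((n : ℝ) + p - 2) / p) * Real.Gamma ((n : ℝ) / p) /
        Real.Gamma (((n : ℝ) - 1) / p) ^ 2) < q) :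
    ∃ K L : Set (EuclideanSpace ℝ (Fin n)),
      (IsCompact K ∧ Convex ℝ K ∧ (interior K).Nonempty ∧ 0 ∈ K) ∧
      (IsCompact L ∧ Convex ℝ L ∧ (interior L).Nonempty ∧ 0 ∈ L) ∧
      ∃ lam ∈ Set.Ioo (0 : ℝ) 1,
        (μ (lam • K + (1 - lam) • L)).toReal ^ q <
          lam * (μ K).toReal ^ q + (1 - lam) * (μ L).toReal ^ q := by
  obtain ⟨m, rfl⟩ : ∃ m, n = m + 1 + 1 := ⟨n - 2, by omega⟩
  have hp0 : 0 < p := by linarith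
  have g1 := Real.Gamma_pos_of_pos (s := ((m + 1 + 1 : ℕ) : ℝ) / 2) (by positivity)
  have g2 := Real.Gamma_pos_of_pos (s := ((m + 1 + 1 : ℕ) : ℝ) / p) (by positivity)
  obtain ⟨t, ht, hlt⟩ := exists_t p hp m q hq (by
    refine lt_of_eq_of_lt ?_ hq'
    have e1 : ((m + 1 + 1 : ℕ) : ℝ) = (m : ℝ) + 2 := by push_cast; ring
    rw [e1, show (m : ℝ) + 2 - 1 = m + 1 by ring, show (m : ℝ) + 2 + p - 2 = m + p by ring])
  exact main_aux p hp (m + 1) (by omega) _ (by positivity) q hq μ hμ t ht hlt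
end

section
/- Let V : ℝⁿ → ℝ be a C² convex function whose Hessian ∇²V(x) is positive definite for almost every x ∈ ℝⁿ, and let μ be the measure with density e^{-V} with respect to the Lebesgue measure. Let K be a convex body in ℝⁿ and let u be a C² function on a neighborhood of K satisfying Δu - ⟨∇V, ∇u⟩ = 1 on K. Then ∫_K (‖∇²u‖² + ⟨∇²V ∇u, ∇u⟩) dμ ≥ ∫_K 1/(n + ⟨(∇²V)^{-1} ∇V, ∇V⟩) dμ, where ‖∇²u‖ denotes the Hilbert–Schmidt (Frobenius) norm of the Hessian of u. -/
open MeasureTheory Real Set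
open scoped RealInnerProductSpace

lemma aux_arith {n A N B T S : ℝ} (hn : 0 < n) (hA : 0 ≤ A) (hN : 0 ≤ N) (hB : 0 ≤ B)
    (hT : T ^ 2 ≤ n * N) (hS : S ^ 2 ≤ A * B) (h : T - S = 1) :
    1 / (n + A) ≤ N + B := by
  have h1 : (2 * (T * S)) ^ 2 ≤ (n * B + A * N) ^ 2 := by
    have : T ^ 2 * S ^ 2 ≤ (n * N) * (A * B) :=
      mul_le_mul hT hS (sq_nonneg _) (by positivity)
    nlinarith [sq_nonneg (n * B - A * N)]
  have h2 := abs_le_of_sq_le_sq' h1 (by positivity)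
  rw [div_le_iff₀ (by positivity)]
  have h3 : (T - S) ^ 2 = 1 := by rw [h]; norm_num
  nlinarith [h2.1]

lemma aux_cs {E : Type*} [NormedAddCommGroup E] [InnerProductSpace ℝ E] (A : E →L[ℝ] E)
    (hs : ∀ v w, ⟪A v, w⟫ = ⟪A w, v⟫) (hp : ∀ v, 0 ≤ ⟪A v, v⟫) (w p : E) :
    ⟪A w, p⟫ ^ 2 ≤ ⟪A w, w⟫ * ⟪A p, p⟫ := by
  have h := discrim_le_zero (a := ⟪A p, p⟫) (b := 2 * ⟪A w, p⟫) (c := ⟪A w, w⟫) (by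
    intro t
    have := hp (w + t • p)
    simp only [map_add, map_smul, inner_add_left, inner_add_right, inner_smul_left,
      inner_smul_right, hs p w] at this
    simp at this
    nlinarith)
  rw [discrim] at h
  nlinarith

lemma aux_inv {E : Type*} [NormedAddCommGroup E] [InnerProductSpace ℝ E] [FiniteDimensional ℝ E]
    (A : E →L[ℝ] E) (hp : ∀ v, v ≠ 0 → 0 < ⟪A v, v⟫) : A.IsInvertible := by
  have hi : Function.Injective (A : E →ₗ[ℝ] E) := by
    rw [injective_iff_map_eq_zero]
    intro v hv
    by_contra hne
    have := hp v hne
    have hv' : A v = 0 := hv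
    simp [hv'] at this
  refine ⟨(LinearEquiv.ofInjectiveEndo (A : E →ₗ[ℝ] E) hi).toContinuousLinearEquiv, ?_⟩
  ext v
  rfl

lemma aux_grad {n : ℕ} {U : Set (EuclideanSpace ℝ (Fin n))} (hU : IsOpen U)
    {u : EuclideanSpace ℝ (Fin n) → ℝ} (hu : ContDiffOn ℝ 2 u U) :
    ContDiffOn ℝ 1 (gradient u) U := by
  have h := hu.fderiv_of_isOpen (m := 1) hU (by norm_num)
  exact ((InnerProductSpace.toDual ℝ
    (EuclideanSpace ℝ (Fin n))).symm.toContinuousLinearEquiv.contDiff).comp_contDiffOn h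

lemma aux_symm {n : ℕ} {V : EuclideanSpace ℝ (Fin n) → ℝ}
    (hV : ContDiff ℝ 2 V) (x v w : EuclideanSpace ℝ (Fin n)) :
    ⟪fderiv ℝ (gradient V) x v, w⟫ = ⟪fderiv ℝ (gradient V) x w, v⟫ := by
  have key : ∀ v w, ⟪fderiv ℝ (gradient V) x v, w⟫ = fderiv ℝ (fderiv ℝ V) x v w := by
    intro v w
    have hd : DifferentiableAt ℝ (fderiv ℝ V) x :=
      (hV.fderiv_right (m := 1) (by norm_num)).differentiable (by norm_num) x
    have h1 := ((InnerProductSpace.toDual ℝ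
      (EuclideanSpace ℝ (Fin n))).symm.toContinuousLinearEquiv.hasFDerivAt
        (x := fderiv ℝ V x)).comp x hd.hasFDerivAt
    have h2 : fderiv ℝ (gradient V) x = _ := h1.fderiv
    rw [h2]
    exact InnerProductSpace.toDual_symm_apply
  rw [key, key]
  exact (hV.contDiffAt.isSymmSndFDerivAt (by simp)) v w

theorem stmt_3 (n : ℕ) (hn : 1 ≤ n)
    (V : EuclideanSpace ℝ (Fin n) → ℝ)
    (hV : ContDiff ℝ 2 V) (hVconv : ConvexOn ℝ Set.univ V)
    (hVpd : ∀ᵐ x ∂(volume : Measure (EuclideanSpace ℝ (Fin n))),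
      ∀ v : EuclideanSpace ℝ (Fin n), v ≠ 0 → 0 < ⟪fderiv ℝ (gradient V) x v, v⟫)
    (μ : Measure (EuclideanSpace ℝ (Fin n)))
    (hμ : μ = volume.withDensity (fun x => ENNReal.ofReal (Real.exp (-V x))))
    (K : Set (EuclideanSpace ℝ (Fin n)))
    (hKc : IsCompact K) (hKv : Convex ℝ K) (hKi : (interior K).Nonempty)
    (U : Set (EuclideanSpace ℝ (Fin n))) (hU : IsOpen U) (hKU : K ⊆ U)
    (u : EuclideanSpace ℝ (Fin n) → ℝ) (hu : ContDiffOn ℝ 2 u U)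
    (hPDE : ∀ x ∈ K,
      (∑ i : Fin n, ⟪fderiv ℝ (gradient u) x (EuclideanSpace.single i 1),
        EuclideanSpace.single i 1⟫) - ⟪gradient V x, gradient u x⟫ = 1) :
    ∫ x in K, (1 / ((n : ℝ) +
        ⟪(fderiv ℝ (gradient V) x).inverse (gradient V x), gradient V x⟫)) ∂μ ≤
      ∫ x in K,
        ((∑ i : Fin n, ‖fderiv ℝ (gradient u) x (EuclideanSpace.single i 1)‖ ^ 2) +
          ⟪fderiv ℝ (gradient V) x (gradient u x), gradient u x⟫) ∂μ := by

  have hVc : Continuous V := hV.continuous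
  have hμlf : IsLocallyFiniteMeasure μ := by
    rw [hμ]
    exact IsLocallyFiniteMeasure.withDensity_ofReal (by fun_prop)
  have hgu := aux_grad hU hu
  have hguc : ContinuousOn (gradient u) K := hgu.continuousOn.mono hKU
  have hHu : ContinuousOn (fderiv ℝ (gradient u)) K :=
    (hgu.continuousOn_fderiv_of_isOpen hU (by norm_num)).mono hKU
  have hgV := aux_grad isOpen_univ hV.contDiffOn
  have hHV : ContinuousOn (fderiv ℝ (gradient V)) K :=
    (hgV.continuousOn_fderiv_of_isOpen isOpen_univ (by norm_num)).mono (subset_univ _)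
  have hae : ∀ᵐ x ∂(μ.restrict K), x ∈ K ∧
      ∀ v : EuclideanSpace ℝ (Fin n), v ≠ 0 → 0 < ⟪fderiv ℝ (gradient V) x v, v⟫ := by
    have h1 : ∀ᵐ x ∂μ, ∀ v : EuclideanSpace ℝ (Fin n), v ≠ 0 →
        0 < ⟪fderiv ℝ (gradient V) x v, v⟫ := by
      rw [hμ]
      exact (withDensity_absolutelyContinuous _ _).ae_le hVpd
    filter_upwards [ae_restrict_mem hKc.measurableSet, ae_restrict_of_ae h1] with x h2 h3
    exact ⟨h2, h3⟩
  have hn0 : (0 : ℝ) < n := by exact_mod_cast hn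
  have hfacts : ∀ x, (∀ v : EuclideanSpace ℝ (Fin n), v ≠ 0 →
        0 < ⟪fderiv ℝ (gradient V) x v, v⟫) →
      (∀ v : EuclideanSpace ℝ (Fin n), 0 ≤ ⟪fderiv ℝ (gradient V) x v, v⟫) ∧
      fderiv ℝ (gradient V) x ((fderiv ℝ (gradient V) x).inverse (gradient V x))
        = gradient V x ∧
      0 ≤ ⟪(fderiv ℝ (gradient V) x).inverse (gradient V x), gradient V x⟫ := by
    intro x hx
    have h0 : ∀ v : EuclideanSpace ℝ (Fin n), 0 ≤ ⟪fderiv ℝ (gradient V) x v, v⟫ := by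
      intro v
      by_cases hv : v = 0
      · simp [hv]
      · exact (hx v hv).le
    have h1 := (aux_inv _ hx).self_apply_inverse (gradient V x)
    refine ⟨h0, h1, ?_⟩
    have h2 := h0 ((fderiv ℝ (gradient V) x).inverse (gradient V x))
    rwa [h1, real_inner_comm] at h2
  apply integral_mono_of_nonneg
  · filter_upwards [hae] with x hx
    have := (hfacts x hx.2).2.2
    simp only [Pi.zero_apply]
    positivity
  · apply ContinuousOn.integrableOn_compact hKc
    refine ContinuousOn.add ?_ ?_
    · refine continuousOn_finsetSum _ fun i _ => ?_
      exact ((hHu.clm_apply continuousOn_const).norm).pow 2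
    · exact (hHV.clm_apply hguc).inner hguc
  · filter_upwards [hae] with x hx
    obtain ⟨h0, h1, h2⟩ := hfacts x hx.2
    refine aux_arith hn0 h2 (by positivity) (h0 _) ?_ ?_ (hPDE x hx.1)
    · have h3 := sq_sum_le_card_mul_sum_sq (s := (Finset.univ : Finset (Fin n)))
        (f := fun i => ⟪fderiv ℝ (gradient u) x (EuclideanSpace.single i 1),
        EuclideanSpace.single i 1⟫)
      simp only [Finset.card_univ, Fintype.card_fin] at h3
      refine h3.trans ?_
      refine mul_le_mul_of_nonneg_left (Finset.sum_le_sum fun i _ => ?_) hn0.le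
      rw [← sq_abs]
      gcongr
      refine (abs_real_inner_le_norm _ _).trans ?_
      simp
    · have h3 := aux_cs _ (aux_symm hV x) h0
        ((fderiv ℝ (gradient V) x).inverse (gradient V x)) (gradient u x)
      rw [h1] at h3
      rwa [real_inner_comm (gradient V x) ((fderiv ℝ (gradient V) x).inverse (gradient V x))]
end
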